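/- There exists a constant C > 0 such that the following holds. Every weighted graph w on a finite vertex set V with |V| = n ≥ 3 whose support graph is connected, with m edges (pairs of positive weight), has a spanning tree T of its support graph such that the total stretch Σ_{e ∈ E} stretch_T(e) is at most C · m · log n · (log log n)³. -/

import Mathlib

open Matrix

/-!
The tree is found by petal decomposition (Abraham and Neiman), in a form that cuts off one petal at
a time.  Give each edge the length `1 / w`, so that the stretch of an edge is the tree distance of
its ends divided by its length.

A cluster `X` comes with a root `x₀`, the distances `D` from it, and a protected shortest path `P`
from `x₀` to a target.  Let `Δ` be the largest value of `D`.  A petal of level `r` around a shortest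
path from `x₀` to `t` is a sublevel set of a `4`-Lipschitz function `f` (`exists_petal`), and
cutting it off does not change distances from `x₀` in the complement (`petal_cut`).  The petal's
root is the first vertex `x₁` of the path inside it.  The trees of the two parts are joined by the
path edge into `x₁` (`glue`).

If the protected path ends far from the root, the next petal is grown around that path, which is
then divided between the two parts.  Otherwise the petal is grown around a path to a farthest vertex
and misses the protected path; the edges of the new path inside the petal are halved, and that part
of it becomes the protected path of the petal.  So a halved edge always stays on the protected path
of its cluster, and no edge is halved twice (`exists_treeFor`).  Halving the path inside a new
petal, and following the protected path, whose current lengths are at least half of the original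
ones, to reach a petal around it, gain enough to keep every vertex within original distance `4 * D`
of the root in the final tree (`IsTreeFor.dist`).  Hence an edge that is cut in a cluster of radius
`Δ` has its ends at tree distance at most `8 * Δ`.

The level `r` is chosen in `(0, Δ / 8)` by region growing.  Let `M` be the volume of the cluster
(vertices plus ordered adjacent pairs) and `u` the volume inside.  As long as the cut is expensive,
the volume inside doubles; with step lengths proportional to `1 / (k₀ - k)`, whose sum is a harmonic
sum `N = O(log log M)`, some level has a cut of cost
`O(N / Δ) * (u * log (M / u) + (M - u) * log (M / (M - u)))` (`grow_two`, `exists_level`).  The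
bracket is what the potential `M * log M` loses in the split (`entropy_split`), so all the cut edges
together contribute at most `4096 * N * (M * log M)` to the sum of the stretches over ordered pairs.
Since `M ≤ 4 * m` and `M ≤ n ^ 3`, the total stretch is `O(m * log n * (3 + log (log n)))`, and for
`n ≥ 3` the last factor is at most a constant times `log (log n) ^ 3`.
-/

namespace LowStretch

/-! ### Walk lengths and distances in clusters -/

/-- `Reach A ℓ u v L`: some walk from `u` to `v` along the relation `A` has total `ℓ`-length at
most `L`. -/
inductive Reach {V : Type} (A : V → V → Prop) (ℓ : V → V → ℝ) (u : V) : V → ℝ → Prop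
  | refl (L : ℝ) (h : 0 ≤ L) : Reach A ℓ u u L
  | step (v x : V) (L L' : ℝ) (h : Reach A ℓ u v L) (hA : A v x) (hL : L + ℓ v x ≤ L') :
      Reach A ℓ u x L'

section Walks

variable {V : Type} {A A' : V → V → Prop} {ℓ ℓ' : V → V → ℝ}

lemma Reach.mono {u v : V} {L L' : ℝ} (h : Reach A ℓ u v L) (hL : L ≤ L') :
    Reach A ℓ u v L' := by
  cases h with
  | refl _ h => exact .refl _ (h.trans hL)
  | step v _ L₁ _ h hA h' => exact .step _ _ _ _ h hA (h'.trans hL)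

lemma Reach.trans {u v x : V} {L L' : ℝ} (h : Reach A ℓ u v L) (h' : Reach A ℓ v x L') :
    Reach A ℓ u x (L + L') := by
  induction h' with
  | refl L₁ h₁ => exact h.mono (by linarith)
  | step b c L₁ L₂ _ hA hL ih => exact .step _ _ _ _ ih hA (by linarith)

lemma Reach.single {u v : V} {L : ℝ} (h : A u v) (hL : ℓ u v ≤ L) : Reach A ℓ u v L :=
  .step u v 0 L (.refl 0 le_rfl) h (by linarith)

lemma Reach.symm (hA : ∀ u v, A u v → A v u) (hℓ : ∀ u v, ℓ u v = ℓ v u) {u v : V} {L : ℝ}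
    (h : Reach A ℓ u v L) : Reach A ℓ v u L := by
  induction h with
  | refl L₁ h₁ => exact .refl _ h₁
  | step b c L₁ L₂ _ h hL ih =>
    exact ((Reach.single (hA _ _ h) (hℓ c b).le).trans ih).mono (by linarith)

lemma Reach.map {κ : ℝ} (hκ : 0 ≤ κ) (hA : ∀ u v, A u v → A' u v)
    (hℓ : ∀ u v, A u v → ℓ' u v ≤ κ * ℓ u v) {u v : V} {L : ℝ}
    (h : Reach A ℓ u v L) : Reach A' ℓ' u v (κ * L) := by
  induction h with
  | refl L₁ h₁ => exact .refl _ (by positivity)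
  | step b c L₁ L₂ _ h hL ih =>
    refine .step _ _ _ _ ih (hA _ _ h) ?_
    have := hℓ _ _ h
    have := mul_le_mul_of_nonneg_left hL hκ
    linarith

lemma Reach.map_le (hA : ∀ u v, A u v → A' u v)
    (hℓ : ∀ u v, A u v → ℓ' u v ≤ ℓ u v) {u v : V} {L : ℝ}
    (h : Reach A ℓ u v L) : Reach A' ℓ' u v L := by
  simpa using h.map (κ := 1) zero_le_one hA (by simpa using hℓ)

lemma Reach.lip {f : V → ℝ} (hf : ∀ u v, A u v → f v ≤ f u + ℓ u v) {u v : V} {L : ℝ}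
    (h : Reach A ℓ u v L) : f v ≤ f u + L := by
  induction h with
  | refl L₁ h₁ => linarith
  | step b c L₁ L₂ _ h hL ih =>
    have := hf _ _ h
    linarith

end Walks

section Potentials

variable {V : Type}

/-- Adjacency in the subgraph of `G` induced on the cluster `X`. -/
def InAdj (G : SimpleGraph V) (X : Finset V) (u v : V) : Prop := G.Adj u v ∧ u ∈ X ∧ v ∈ X

lemma InAdj.symm {G : SimpleGraph V} {X : Finset V} {u v : V} (h : InAdj G X u v) :
    InAdj G X v u := ⟨h.1.symm, h.2.2, h.2.1⟩

/-- Multi-source distances: for sources `p ∈ P` with initial values `c p` there is a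
`1`-Lipschitz potential, at most `c` on `P`, such that every vertex either is a source at its
initial value or has a neighbour through which its value is attained.  It is obtained as the
largest `1`-Lipschitz function that is at most `c` on `P`. -/
lemma exists_potential [Finite V] (G : SimpleGraph V) (X P : Finset V) (ℓ : V → V → ℝ) (c : V → ℝ)
    (hpos : ∀ u v, InAdj G X u v → 0 < ℓ u v)
    (hconn : ∀ x ∈ X, ∃ p ∈ P, ∃ L, Reach (InAdj G X) ℓ p x L) :
    ∃ F : V → ℝ, (∀ p ∈ P, p ∈ X → F p ≤ c p) ∧
      (∀ u v, InAdj G X u v → F v ≤ F u + ℓ u v) ∧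
      ∀ x ∈ X, (x ∈ P ∧ F x = c x) ∨ ∃ u, InAdj G X u x ∧ F x = F u + ℓ u x := by
  classical
  let S : Set (V → ℝ) := {F | (∀ p ∈ P, F p ≤ c p) ∧
    ∀ u v, InAdj G X u v → F v ≤ F u + ℓ u v}
  have hne : S.Nonempty := by
    obtain ⟨b, hb⟩ := (Finset.finite_toSet (P.image c)).bddBelow
    refine ⟨fun _ => b, fun p hp => hb (by simpa using ⟨p, hp, rfl⟩), fun u v h => ?_⟩
    have := hpos _ _ h
    linarith
  have hbdd : ∀ x ∈ X, BddAbove ((fun F : V → ℝ => F x) '' S) := by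
    intro x hx
    obtain ⟨p, hp, L, hL⟩ := hconn x hx
    refine ⟨c p + L, ?_⟩
    rintro _ ⟨F, hF, rfl⟩
    have h1 := hL.lip hF.2
    have h2 := hF.1 p hp
    simp only
    linarith
  let F : V → ℝ := fun x => sSup ((fun F : V → ℝ => F x) '' S)
  have hle : ∀ f ∈ S, ∀ x ∈ X, f x ≤ F x := fun f hf x hx =>
    le_csSup (hbdd x hx) ⟨f, hf, rfl⟩
  have hFc : ∀ p ∈ P, F p ≤ c p := by
    intro p hp
    refine csSup_le (hne.image _) ?_
    rintro _ ⟨f, hf, rfl⟩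
    exact hf.1 p hp
  have hFl : ∀ u v, InAdj G X u v → F v ≤ F u + ℓ u v := by
    intro u v h
    refine csSup_le (hne.image _) ?_
    rintro _ ⟨f, hf, rfl⟩
    have h1 := hf.2 u v h
    have h2 := hle f hf u h.2.1
    simp only
    linarith
  refine ⟨F, fun p hp _ => hFc p hp, hFl, fun x hx => ?_⟩
  by_contra! hcon
  obtain ⟨h1, h2⟩ := hcon
  -- a vertex where nothing is tight could be raised, against maximality
  obtain ⟨ε, hε, hεc, hεl⟩ : ∃ ε : ℝ, 0 < ε ∧ (x ∈ P → F x + ε ≤ c x) ∧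
      ∀ u, InAdj G X u x → F x + ε ≤ F u + ℓ u x := by
    have key : ∀ a b : ℝ, a < b → ∀ᶠ ε : ℝ in nhdsWithin 0 (Set.Ioi 0), a + ε ≤ b := by
      intro a b hab
      have : ∀ᶠ ε : ℝ in nhds 0, ε < b - a := eventually_lt_nhds (by linarith)
      filter_upwards [this.filter_mono nhdsWithin_le_nhds] with ε h
      linarith
    have e1 : ∀ᶠ ε : ℝ in nhdsWithin 0 (Set.Ioi 0), (x ∈ P → F x + ε ≤ c x) := by
      by_cases hxP : x ∈ P
      · filter_upwards [key _ _ (lt_of_le_of_ne (hFc x hxP) (h1 hxP))] with ε h _ using h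
      · simp [hxP]
    have e2 : ∀ᶠ ε : ℝ in nhdsWithin 0 (Set.Ioi 0),
        ∀ u, InAdj G X u x → F x + ε ≤ F u + ℓ u x := by
      rw [Filter.eventually_all]
      intro u
      by_cases hu : InAdj G X u x
      · filter_upwards [key _ _ (lt_of_le_of_ne (hFl u x hu) (h2 u hu))] with ε h _ using h
      · simp [hu]
    obtain ⟨ε, h⟩ := (e1.and (e2.and self_mem_nhdsWithin)).exists
    exact ⟨ε, h.2.2, h.1, h.2.1⟩
  have hmem : Function.update F x (F x + ε) ∈ S := by
    refine ⟨fun p hp => ?_, fun u v h => ?_⟩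
    · by_cases hpx : p = x
      · subst hpx; simpa using hεc hp
      · simpa [hpx] using hFc p hp
    · have hne : u ≠ v := h.1.ne
      by_cases hv : v = x
      · subst hv
        simpa [hne] using hεl u h
      · by_cases hu : u = x
        · subst hu
          have := hFl _ _ h
          simp only [Function.update_self, ne_eq, hv, not_false_eq_true,
            Function.update_of_ne]
          linarith
        · simpa [hu, hv] using hFl _ _ h
  have := hle _ hmem x hx
  simp only [Function.update_self] at this
  linarith

/-- `D` is the distance from `x₀` in the cluster `X` with edge lengths `ℓ`, described by being
`1`-Lipschitz and attained through some neighbour at every vertex other than `x₀`. -/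
structure IsDist (G : SimpleGraph V) (X : Finset V) (ℓ : V → V → ℝ) (x₀ : V) (D : V → ℝ) :
    Prop where
  mem : x₀ ∈ X
  root : D x₀ = 0
  lip : ∀ u v, InAdj G X u v → D v ≤ D u + ℓ u v
  tight : ∀ x ∈ X, x ≠ x₀ → ∃ u, InAdj G X u x ∧ D x = D u + ℓ u x

/-- Induction along the tight edges of a potential `D` on a finite set. -/
lemma tight_induction (X : Finset V) (D : V → ℝ) (p : V → Prop)
    (h : ∀ x ∈ X, (∀ y ∈ X, D y < D x → p y) → p x) : ∀ x ∈ X, p x := by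
  intro x hx
  induction hn : (X.filter fun y => D y < D x).card using Nat.strong_induction_on
    generalizing x with
  | _ n ih =>
    refine h x hx fun y hy hyx => ih _ ?_ y hy rfl
    rw [← hn]
    refine Finset.card_lt_card ?_
    rw [Finset.ssubset_iff_of_subset]
    · exact ⟨y, by simp [hy, hyx], by simp⟩
    · intro z hz
      simp only [Finset.mem_filter] at hz ⊢
      exact ⟨hz.1, hz.2.trans hyx⟩

variable {G : SimpleGraph V} {X : Finset V} {ℓ : V → V → ℝ} {x₀ : V} {D : V → ℝ}

lemma IsDist.nonneg (h : IsDist G X ℓ x₀ D) (hpos : ∀ u v, InAdj G X u v → 0 < ℓ u v) :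
    ∀ x ∈ X, 0 ≤ D x := by
  refine tight_induction X D _ fun x hx ih => ?_
  by_cases hx0 : x = x₀
  · rw [hx0, h.root]
  · obtain ⟨u, hu, he⟩ := h.tight x hx hx0
    have := hpos _ _ hu
    have := ih u hu.2.1 (by linarith)
    linarith

lemma IsDist.reach (h : IsDist G X ℓ x₀ D) (hpos : ∀ u v, InAdj G X u v → 0 < ℓ u v) :
    ∀ x ∈ X, Reach (InAdj G X) ℓ x₀ x (D x) := by
  refine tight_induction X D _ fun x hx ih => ?_
  by_cases hx0 : x = x₀
  · rw [hx0, h.root]; exact .refl _ le_rfl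
  · obtain ⟨u, hu, he⟩ := h.tight x hx hx0
    have := hpos _ _ hu
    exact .step _ _ _ _ (ih u hu.2.1 (by linarith)) hu he.ge

lemma IsDist.le_of_reach (h : IsDist G X ℓ x₀ D) {x : V} {L : ℝ}
    (hL : Reach (InAdj G X) ℓ x₀ x L) : D x ≤ L := by
  have := hL.lip h.lip
  rw [h.root] at this
  linarith

lemma exists_isDist [Finite V] (hx₀ : x₀ ∈ X) (hpos : ∀ u v, InAdj G X u v → 0 < ℓ u v)
    (hconn : ∀ x ∈ X, ∃ L, Reach (InAdj G X) ℓ x₀ x L) : ∃ D, IsDist G X ℓ x₀ D := by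
  obtain ⟨F, h1, h2, h3⟩ := exists_potential G X {x₀} ℓ (fun _ => 0) hpos
    (by simpa using hconn)
  have h0 : ∀ x ∈ X, 0 ≤ F x := by
    refine tight_induction X F _ fun x hx ih => ?_
    rcases h3 x hx with ⟨_, h⟩ | ⟨u, hu, he⟩
    · exact h.ge
    · have := hpos _ _ hu
      have := ih u hu.2.1 (by linarith)
      linarith
  refine ⟨F, hx₀, le_antisymm (h1 x₀ (by simp) hx₀) (h0 x₀ hx₀), h2, fun x hx hne => ?_⟩
  rcases h3 x hx with ⟨h, _⟩ | h
  · simp [hne] at h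
  · exact h

end Potentials

/-! ### Shortest paths and petals -/

section Petals

variable {V : Type}

/-- `P` is the vertex set of a shortest path from `x₀` to `t` in the cluster `X`, where `D` is the
distance from `x₀`: `pr p` is the predecessor on the path of each `p ∈ P` other than `x₀`, and
`chain` says that no vertex of `P` lies strictly between `pr p` and `p`. -/
structure SPath (G : SimpleGraph V) (X : Finset V) (ℓ : V → V → ℝ) (D : V → ℝ) (x₀ t : V)
    (P : Finset V) (pr : V → V) : Prop where
  sub : P ⊆ X
  root : x₀ ∈ P
  tgt : t ∈ P
  le : ∀ p ∈ P, D p ≤ D t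
  inj : ∀ p ∈ P, ∀ q ∈ P, D p = D q → p = q
  pr_mem : ∀ p ∈ P, p ≠ x₀ → pr p ∈ P
  pr_adj : ∀ p ∈ P, p ≠ x₀ → G.Adj (pr p) p
  pr_eq : ∀ p ∈ P, p ≠ x₀ → D p = D (pr p) + ℓ (pr p) p
  chain : ∀ p ∈ P, p ≠ x₀ → ∀ q ∈ P, D q < D p → D q ≤ D (pr p)

variable {G : SimpleGraph V} {X P : Finset V} {ℓ : V → V → ℝ} {x₀ t : V} {D : V → ℝ} {pr : V → V}

lemma SPath.single (h : IsDist G X ℓ x₀ D) : SPath G X ℓ D x₀ x₀ {x₀} pr where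
  sub := by simpa using h.mem
  root := by simp
  tgt := by simp
  le := by simp
  inj := by simp
  pr_mem := by simp
  pr_adj := by simp
  pr_eq := by simp
  chain := by simp

/-- Every vertex is the end of some shortest path from the root. -/
lemma exists_sPath (h : IsDist G X ℓ x₀ D) (hpos : ∀ u v, InAdj G X u v → 0 < ℓ u v) :
    ∀ t ∈ X, ∃ P pr, SPath G X ℓ D x₀ t P pr := by
  classical
  refine tight_induction X D _ fun t ht ih => ?_
  by_cases ht0 : t = x₀
  · subst ht0; exact ⟨_, id, SPath.single h⟩
  · obtain ⟨u, hu, he⟩ := h.tight t ht ht0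
    have hlt : D u < D t := by have := hpos _ _ hu; linarith
    obtain ⟨P, pr, hP⟩ := ih u hu.2.1 hlt
    have htP : ∀ p ∈ P, p ≠ t ∧ D p < D t := fun p hp => by
      have := hP.le p hp
      exact ⟨by rintro rfl; linarith, by linarith⟩
    have hpr : ∀ p ∈ P, Function.update pr t u p = pr p := fun p hp => by
      simp [(htP p hp).1]
    refine ⟨insert t P, Function.update pr t u, ?_, ?_, ?_, ?_, ?_, ?_, ?_, ?_, ?_⟩
    · exact Finset.insert_subset ht hP.sub
    · simp [hP.root]
    · simp
    · intro p hp
      rcases Finset.mem_insert.1 hp with rfl | hp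
      · exact le_rfl
      · exact (htP p hp).2.le
    · intro p hp q hq hpq
      rcases Finset.mem_insert.1 hp with rfl | hp' <;> rcases Finset.mem_insert.1 hq with rfl | hq'
      · rfl
      · have := (htP q hq').2; linarith
      · have := (htP p hp').2; linarith
      · exact hP.inj p hp' q hq' hpq
    · intro p hp h0
      rcases Finset.mem_insert.1 hp with rfl | hp
      · simp [hP.tgt]
      · rw [hpr p hp]; exact Finset.mem_insert_of_mem (hP.pr_mem p hp h0)
    · intro p hp h0
      rcases Finset.mem_insert.1 hp with rfl | hp
      · simpa using hu.1
      · rw [hpr p hp]; exact hP.pr_adj p hp h0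
    · intro p hp h0
      rcases Finset.mem_insert.1 hp with rfl | hp
      · simpa using he
      · rw [hpr p hp]; exact hP.pr_eq p hp h0
    · intro p hp h0 q hq hqp
      rcases Finset.mem_insert.1 hp with rfl | hp
      · rcases Finset.mem_insert.1 hq with rfl | hq
        · exact absurd hqp (lt_irrefl _)
        · simpa using hP.le q hq
      · have hlt := (htP p hp).2
        rw [hpr p hp]
        rcases Finset.mem_insert.1 hq with hq' | hq'
        · rw [hq'] at hqp; linarith
        · exact hP.chain p hp h0 q hq' hqp

/-- Walking along a shortest path inside a set that contains everything on it beyond `x₁`. -/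
lemma SPath.reach (hP : SPath G X ℓ D x₀ t P pr) (hpos : ∀ u v, InAdj G X u v → 0 < ℓ u v)
    {A : V → V → Prop} {ℓ' : V → V → ℝ} {κ : ℝ} {x₁ : V} (hx₁ : x₁ ∈ P)
    (hA : ∀ p ∈ P, D x₁ < D p → A (pr p) p ∧ ℓ' (pr p) p ≤ κ * ℓ (pr p) p) (h0 : D x₀ ≤ D x₁) :
    ∀ p ∈ P, D x₁ ≤ D p → Reach A ℓ' x₁ p (κ * (D p - D x₁)) := by
  refine tight_induction P D _ fun p hp ih hle => ?_
  rcases hle.eq_or_lt with he | hlt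
  · rw [hP.inj x₁ hx₁ p hp he]
    exact .refl _ (by simp)
  · have hne : p ≠ x₀ := by rintro rfl; linarith
    have hpr := hP.pr_eq p hp hne
    have hprm := hP.pr_mem p hp hne
    have hl := hpos (pr p) p ⟨hP.pr_adj p hp hne, hP.sub hprm, hP.sub hp⟩
    have h1 := ih _ hprm (by linarith) (hP.chain p hp hne x₁ hx₁ hlt)
    obtain ⟨h2, h3⟩ := hA p hp hlt
    refine .step _ _ _ _ h1 h2 ?_
    rw [hpr]
    linarith

/-- The petal function of a shortest path `P` from `x₀` to `t`.  With `d` the distance in the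
cluster, `f x` is the minimum over `p ∈ P` of `d p t + 2 * (d p x + D p - D x)`.  Its sublevel set
of level `r` is the petal: the union over `p ∈ P` of the cones at `p` with apex slack
`(r - d p t) / 2`.  The field `cone` traces a vertex of a sublevel set back to the path within
that sublevel set. -/
structure IsPetal (G : SimpleGraph V) (X : Finset V) (ℓ : V → V → ℝ) (D : V → ℝ) (t : V)
    (P : Finset V) (f : V → ℝ) : Prop where
  path : ∀ p ∈ P, f p = D t - D p
  ge : ∀ x ∈ X, D t - D x ≤ f x
  lip : ∀ u v, InAdj G X u v → f v ≤ f u + 4 * ℓ u v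
  mono : ∀ u v, InAdj G X u v → D v = D u + ℓ u v → f v ≤ f u
  cone : ∀ x ∈ X, ∃ p ∈ P, f p ≤ f x ∧ Reach (fun u v => InAdj G X u v ∧ f u ≤ f x ∧ f v ≤ f x) ℓ p x
    ((f x + 2 * D x - D t - D p) / 2)

lemma exists_petal [Finite V] (hpos : ∀ u v, InAdj G X u v → 0 < ℓ u v)
    (hsym : ∀ u v, ℓ u v = ℓ v u) (hD : IsDist G X ℓ x₀ D) (hP : SPath G X ℓ D x₀ t P pr) :
    ∃ f, IsPetal G X ℓ D t P f := by
  obtain ⟨F, h1, h2, h3⟩ := exists_potential G X P (fun u v => 2 * ℓ u v) D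
    (fun u v h => by have := hpos u v h; positivity) (fun x hx => ⟨x₀, hP.root, 2 * D x,
      (hD.reach hpos x hx).map (κ := 2) (by norm_num) (fun _ _ h => h) (fun _ _ _ => le_rfl)⟩)
  have hF : ∀ x ∈ X, D x ≤ F x := by
    refine tight_induction X F _ fun x hx ih => ?_
    rcases h3 x hx with ⟨_, h⟩ | ⟨u, hu, he⟩
    · exact h.ge
    · have := hpos _ _ hu
      have := ih u hu.2.1 (by linarith)
      have := hD.lip _ _ hu
      linarith
  refine ⟨fun x => D t + F x - 2 * D x, fun p hp => ?_, fun x hx => ?_, fun u v h => ?_,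
    fun u v h he => ?_, ?_⟩
  · have := h1 p hp (hP.sub hp)
    have := hF p (hP.sub hp)
    linarith
  · have := hF x hx
    linarith
  · have := h2 u v h
    have := hD.lip v u h.symm
    have := hsym u v
    linarith
  · have := h2 u v h
    linarith
  · refine tight_induction X F _ fun x hx ih => ?_
    rcases h3 x hx with ⟨hxP, h⟩ | ⟨u, hu, he⟩
    · exact ⟨x, hxP, le_rfl, .refl _ (by linarith)⟩
    · have := hpos _ _ hu
      obtain ⟨p, hp, hpu, hr⟩ := ih u hu.2.1 (by linarith)
      have hux : D t + F u - 2 * D u ≤ D t + F x - 2 * D x := by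
        have := hD.lip _ _ hu
        linarith
      refine ⟨p, hp, hpu.trans hux, .step u x _ _ (hr.map_le (fun a b h => ?_)
        (fun _ _ _ => le_rfl)) ⟨hu, hux, le_rfl⟩ ?_⟩
      · exact ⟨h.1, h.2.1.trans hux, h.2.2.trans hux⟩
      · linarith

/-- Cutting off the petal of level `r`.  The vertex `x₁` is the first one of the path inside the
petal.  Distances from `x₀` survive in the complement, and the path splits into its two parts.
Inside the petal the lengths may be changed to any `ℓ'` between `κ * ℓ` and `ℓ` which is `κ * ℓ`
along the path: then the path stays shortest, and the distance from `x₁` is bounded by walking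
along the path and then through a cone. -/
lemma petal_cut [Finite V] {f : V → ℝ} (hpos : ∀ u v, InAdj G X u v → 0 < ℓ u v)
    (hD : IsDist G X ℓ x₀ D)
    (hP : SPath G X ℓ D x₀ t P pr) (hf : IsPetal G X ℓ D t P f) {r : ℝ} (hr0 : 0 ≤ r)
    (hrt : r < D t) {W Y : Finset V} (hW : ∀ x, x ∈ W ↔ x ∈ X ∧ f x ≤ r)
    (hY : ∀ x, x ∈ Y ↔ x ∈ X ∧ r < f x) {PW PY : Finset V} (hPW : ∀ x, x ∈ PW ↔ x ∈ P ∧ x ∈ W)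
    (hPY : ∀ x, x ∈ PY ↔ x ∈ P ∧ x ∈ Y) :
    ∃ x₁ ∈ PW, x₁ ≠ x₀ ∧ pr x₁ ∈ PY ∧ D t - r ≤ D x₁ ∧ D t - D (pr x₁) > r ∧
      IsDist G Y ℓ x₀ D ∧ SPath G Y ℓ D x₀ (pr x₁) PY pr ∧
      ∀ (κ : ℝ) (ℓ' : V → V → ℝ), 0 < κ →
        (∀ u v, InAdj G W u v → κ * ℓ u v ≤ ℓ' u v ∧ ℓ' u v ≤ ℓ u v) →
        (∀ p ∈ PW, p ≠ x₁ → ℓ' (pr p) p = κ * ℓ (pr p) p) →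
        ∃ DW, IsDist G W ℓ' x₁ DW ∧ SPath G W ℓ' DW x₁ t PW pr ∧
          ∀ x ∈ W, ∃ p ∈ PW,
            DW x ≤ κ * (D p - D x₁) + (f x + 2 * D x - D t - D p) / 2 := by
  have htW : t ∈ PW := by
    rw [hPW, hW]
    refine ⟨hP.tgt, hP.sub hP.tgt, ?_⟩
    rw [hf.path t hP.tgt]; linarith
  obtain ⟨x₁, hx₁, hmin⟩ := PW.exists_min_image D ⟨t, htW⟩
  have hx₁P := ((hPW _).1 hx₁).1
  have hx₁W := ((hPW _).1 hx₁).2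
  have hfx₁ := ((hW _).1 hx₁W).2
  rw [hf.path x₁ hx₁P] at hfx₁
  have hx0 := hD.root
  have hx1pos : D x₀ < D x₁ := by linarith
  have hne : x₁ ≠ x₀ := by rintro rfl; linarith
  -- membership in the two parts of the path is decided by `D`
  have hmemW : ∀ p ∈ P, D x₁ ≤ D p → p ∈ PW := fun p hp hle => by
    rw [hPW, hW, hf.path p hp]
    exact ⟨hp, hP.sub hp, by linarith⟩
  have hmemY : ∀ p ∈ P, D p < D x₁ → p ∈ PY := fun p hp hlt => by
    rw [hPY, hY]
    refine ⟨hp, hP.sub hp, ?_⟩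
    by_contra hcon
    have := hmin p (by rw [hPW, hW]; exact ⟨hp, hP.sub hp, not_lt.1 hcon⟩)
    linarith
  have hYlt : ∀ p ∈ PY, p ∈ P ∧ D p < D x₁ := fun p hp => by
    obtain ⟨h1, h2⟩ := (hPY p).1 hp
    have h3 := ((hY p).1 h2).2
    rw [hf.path p h1] at h3
    exact ⟨h1, by linarith⟩
  have hprlt : ∀ p ∈ P, p ≠ x₀ → D (pr p) < D p := fun p hp hp0 => by
    have h1 := hP.pr_eq p hp hp0
    have := hpos (pr p) p ⟨hP.pr_adj p hp hp0, hP.sub (hP.pr_mem p hp hp0), hP.sub hp⟩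
    linarith
  have hy₁ : pr x₁ ∈ PY := hmemY _ (hP.pr_mem _ hx₁P hne) (hprlt _ hx₁P hne)
  have hWX : ∀ u v, InAdj G W u v → InAdj G X u v := fun u v h =>
    ⟨h.1, ((hW _).1 h.2.1).1, ((hW _).1 h.2.2).1⟩
  have hYX : ∀ u v, InAdj G Y u v → InAdj G X u v := fun u v h =>
    ⟨h.1, ((hY _).1 h.2.1).1, ((hY _).1 h.2.2).1⟩
  have hx₀Y : x₀ ∈ PY := hmemY _ hP.root hx1pos
  refine ⟨x₁, hx₁, hne, hy₁, by linarith, ?_, ?_, ?_, ?_⟩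
  · have h2 := ((hY _).1 ((hPY _).1 hy₁).2).2
    rw [hf.path _ (hYlt _ hy₁).1] at h2
    exact h2
  · refine ⟨((hPY _).1 hx₀Y).2, hD.root, fun u v h => hD.lip u v (hYX _ _ h), fun x hx hx0 => ?_⟩
    obtain ⟨hxX, hxf⟩ := (hY _).1 hx
    obtain ⟨u, hu, he⟩ := hD.tight x hxX hx0
    exact ⟨u, ⟨hu.1, (hY _).2 ⟨hu.2.1, hxf.trans_le (hf.mono u x hu he)⟩, hx⟩, he⟩
  · refine ⟨fun p hp => ((hPY _).1 hp).2, hx₀Y, hy₁, ?_, ?_, ?_, ?_, ?_, ?_⟩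
    · exact fun p hp => hP.chain x₁ hx₁P hne p (hYlt p hp).1 (hYlt p hp).2
    · exact fun p hp q hq => hP.inj p (hYlt p hp).1 q (hYlt q hq).1
    · exact fun p hp h0 => hmemY _ (hP.pr_mem p (hYlt p hp).1 h0)
        ((hprlt p (hYlt p hp).1 h0).trans (hYlt p hp).2)
    · exact fun p hp => hP.pr_adj p (hYlt p hp).1
    · exact fun p hp => hP.pr_eq p (hYlt p hp).1
    · exact fun p hp h0 q hq => hP.chain p (hYlt p hp).1 h0 q (hYlt q hq).1
  · intro κ ℓ' hκ hℓ' hpath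
    have hpos' : ∀ u v, InAdj G W u v → 0 < ℓ' u v := fun u v h => by
      have := mul_pos hκ (hpos u v (hWX _ _ h))
      linarith [(hℓ' u v h).1]
    have hPW' : ∀ p ∈ PW, p ∈ P ∧ p ∈ W := fun p hp => (hPW p).1 hp
    have hgt : ∀ p ∈ PW, p ≠ x₁ → D x₁ < D p := fun p hp h0 =>
      lt_of_le_of_ne (hmin p hp) fun he => h0 (hP.inj _ hx₁P _ (hPW' p hp).1 he).symm
    have hne0 : ∀ p ∈ PW, p ≠ x₁ → p ≠ x₀ := fun p hp h0 hp0 => by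
      have := hgt p hp h0
      rw [hp0] at this
      linarith
    have hprW : ∀ p ∈ PW, p ≠ x₁ → pr p ∈ PW := fun p hp h0 =>
      hmemW _ (hP.pr_mem p (hPW' p hp).1 (hne0 p hp h0))
        (hP.chain p (hPW' p hp).1 (hne0 p hp h0) x₁ hx₁P (hgt p hp h0))
    have hreachP : ∀ p ∈ PW, Reach (InAdj G W) ℓ' x₁ p (κ * (D p - D x₁)) := by
      intro p hp
      refine hP.reach hpos hx₁P (fun q hq hlt => ?_) hx1pos.le p (hPW' p hp).1 (hmin p hp)
      have hqW := hmemW q hq hlt.le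
      have hq1 : q ≠ x₁ := by rintro rfl; exact lt_irrefl _ hlt
      exact ⟨⟨hP.pr_adj q hq (hne0 q hqW hq1), (hPW' _ (hprW q hqW hq1)).2, (hPW' q hqW).2⟩,
        (hpath q hqW hq1).le⟩
    have hreach : ∀ x ∈ W, ∃ p ∈ PW, Reach (InAdj G W) ℓ' x₁ x
        (κ * (D p - D x₁) + (f x + 2 * D x - D t - D p) / 2) := by
      intro x hx
      obtain ⟨hxX, hxr⟩ := (hW x).1 hx
      obtain ⟨p, hp, hpx, hr⟩ := hf.cone x hxX
      have hpW : p ∈ PW := by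
        rw [hPW, hW]; exact ⟨hp, hP.sub hp, hpx.trans hxr⟩
      have hsub : ∀ u v, (InAdj G X u v ∧ f u ≤ f x ∧ f v ≤ f x) → InAdj G W u v :=
        fun u v h => ⟨h.1.1, (hW _).2 ⟨h.1.2.1, h.2.1.trans hxr⟩,
          (hW _).2 ⟨h.1.2.2, h.2.2.trans hxr⟩⟩
      exact ⟨p, hpW, (hreachP p hpW).trans
        (hr.map_le hsub fun u v h => (hℓ' u v (hsub u v h)).2)⟩
    obtain ⟨DW, hDW⟩ := exists_isDist (ℓ := ℓ') hx₁W hpos' fun x hx => by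
      obtain ⟨p, _, h⟩ := hreach x hx
      exact ⟨_, h⟩
    have hDWP : ∀ p ∈ PW, DW p = κ * (D p - D x₁) := by
      intro p hp
      refine le_antisymm (hDW.le_of_reach (hreachP p hp)) ?_
      have h1 := (hDW.reach hpos' p (hPW' p hp).2).lip (f := fun x => κ * D x) fun u v h => by
        have h1 := hD.lip u v (hWX u v h)
        have h2 := (hℓ' u v h).1
        have := mul_le_mul_of_nonneg_left h1 hκ.le
        linarith
      linarith
    refine ⟨DW, hDW, ⟨fun p hp => (hPW' p hp).2, hx₁, htW, ?_, ?_, hprW, ?_, ?_, ?_⟩, ?_⟩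
    · intro p hp
      rw [hDWP p hp, hDWP t htW]
      have := hP.le p (hPW' p hp).1
      gcongr
    · intro p hp q hq he
      rw [hDWP p hp, hDWP q hq] at he
      have := mul_left_cancel₀ hκ.ne' he
      exact hP.inj p (hPW' p hp).1 q (hPW' q hq).1 (by linarith)
    · exact fun p hp h0 => hP.pr_adj p (hPW' p hp).1 (hne0 p hp h0)
    · intro p hp h0
      rw [hDWP p hp, hDWP _ (hprW p hp h0), hpath p hp h0,
        hP.pr_eq p (hPW' p hp).1 (hne0 p hp h0)]
      ring
    · intro p hp h0 q hq hlt
      rw [hDWP p hp, hDWP q hq] at hlt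
      rw [hDWP q hq, hDWP _ (hprW p hp h0)]
      have h1 := lt_of_mul_lt_mul_left hlt hκ.le
      have := hP.chain p (hPW' p hp).1 (hne0 p hp h0) q (hPW' q hq).1 (by linarith)
      gcongr
    · intro x hx
      obtain ⟨p, hp, h⟩ := hreach x hx
      exact ⟨p, hp, hDW.le_of_reach h⟩

end Petals

/-! ### Region growing and entropy -/

section Growing

open Finset in
/-- One-sided region growing.  If the growth rate `c` always exceeded its claimed bound, then along
steps of length proportional to `1 / (k₀ - k)` the volume `U` would be at least `2 ^ k` after `k`
steps, and would exceed `M / 2` at the end. -/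
lemma grow_one (M N S : ℝ) (k₀ : ℕ) (U c : ℝ → ℝ) (hS : 0 < S) (hk₀ : 1 ≤ k₀)
    (hM1 : (2 : ℝ) ^ k₀ ≤ M) (hM2 : M < 2 ^ (k₀ + 1))
    (hN : ∑ j ∈ range k₀, (1 : ℝ) / (j + 1) ≤ N)
    (hU1 : ∀ r, 0 ≤ r → r ≤ S → 1 ≤ U r)
    (hmono : ∀ r s, 0 ≤ r → r ≤ s → s ≤ S → U r ≤ U s) (hUM : U S ≤ M / 2)
    (hgrow : ∀ a b γ, 0 ≤ a → a ≤ b → b ≤ S → (∀ r, a < r → r < b → γ ≤ c r) →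
      γ * (b - a) ≤ 4 * U b) :
    ∃ r, 0 < r ∧ r < S ∧ c r * S ≤ 32 * N * (U r * Real.log (M / U r)) := by
  by_contra! hcon
  have hM0 : 0 ≤ M := le_trans (by positivity) hM1
  set H : ℝ := ∑ j ∈ range k₀, (1 : ℝ) / (j + 1) with hH
  have hHpos : 0 < H := sum_pos (fun _ _ => by positivity) (by simpa using by omega)
  have hN0 : 0 ≤ N := hHpos.le.trans hN
  let δ : ℕ → ℝ := fun k => S / (H * ((k₀ : ℝ) - k))
  let s : ℕ → ℝ := fun k => ∑ i ∈ range k, δ i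
  have hδ : ∀ k, k < k₀ → 0 < δ k := fun k hk => by
    have : (0 : ℝ) < (k₀ : ℝ) - k := by
      have : (k : ℝ) < k₀ := by exact_mod_cast hk
      linarith
    positivity
  have hsS : s k₀ = S := by
    have h1 : s k₀ = (S / H) * ∑ j ∈ range k₀, (1 : ℝ) / (j + 1) := by
      rw [← sum_range_reflect, mul_sum]
      refine sum_congr rfl fun i hi => ?_
      have hi := mem_range.1 hi
      have h2 : ((k₀ - 1 - i : ℕ) : ℝ) + 1 = (k₀ : ℝ) - i := by
        rw [Nat.sub_sub, Nat.cast_sub (by omega)]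
        push_cast; ring
      rw [h2]
      simp only [δ]
      rw [mul_one_div, div_div]
    rw [h1, ← hH]
    field_simp
  have hsmono : ∀ i j, i ≤ j → j ≤ k₀ → s i ≤ s j := fun i j hij hj =>
    sum_le_sum_of_subset_of_nonneg (range_mono hij) fun k hk _ =>
      (hδ k (by have := mem_range.1 hk; omega)).le
  have hs0 : s 0 = 0 := by simp [s]
  have hsnn : ∀ k, k ≤ k₀ → 0 ≤ s k := fun k hk => hs0 ▸ hsmono 0 k (by omega) hk
  have hsle : ∀ k, k ≤ k₀ → s k ≤ S := fun k hk => hsS ▸ hsmono k k₀ hk le_rfl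
  have key : ∀ k, k ≤ k₀ → (2 : ℝ) ^ k ≤ U (s k) := by
    intro k
    induction k with
    | zero =>
      intro _
      simpa [hs0] using hU1 0 le_rfl hS.le
    | succ k ih =>
      intro hk
      by_contra! hlt
      have ih := ih (by omega)
      have hss : s (k + 1) - s k = δ k := by simp [s, sum_range_succ]
      have hkk : (1 : ℝ) ≤ (k₀ : ℝ) - k := by
        have : ((k + 1 : ℕ) : ℝ) ≤ k₀ := by exact_mod_cast hk
        push_cast at this
        linarith
      have hl2 : 0.69 < Real.log 2 := by have := Real.log_two_gt_d9; linarith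
      have h2k : (0 : ℝ) < 2 ^ k := by positivity
      have hγ := hgrow (s k) (s (k + 1))
        (32 * H * (2 ^ k * (Real.log 2 * ((k₀ : ℝ) - k) / 2)) / S) (hsnn k (by omega))
        (hsmono _ _ (by omega) hk) (hsle _ hk) ?_
      · rw [hss] at hγ
        have h3 : 32 * H * (2 ^ k * (Real.log 2 * ((k₀ : ℝ) - k) / 2)) / S * δ k
            = 16 * Real.log 2 * 2 ^ k := by
          have : (k₀ : ℝ) - k ≠ 0 := by linarith
          simp only [δ]
          field_simp
          ring
        rw [h3] at hγ
        rw [pow_succ] at hlt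
        nlinarith
      · intro r hr1 hr2
        have hr0 : 0 < r := (hsnn k (by omega)).trans_lt hr1
        have hrS : r < S := hr2.trans_le (hsle _ hk)
        have hc := hcon r hr0 hrS
        have hUr1 : 2 ^ k ≤ U r := ih.trans (hmono _ _ (hsnn k (by omega)) hr1.le hrS.le)
        have hUr2 : U r < 2 ^ (k + 1) := (hmono _ _ hr0.le hr2.le (hsle _ hk)).trans_lt hlt
        have hUr3 : U r ≤ M / 2 := (hmono _ _ hr0.le hrS.le le_rfl).trans hUM
        have hUpos : 0 < U r := by linarith
        have hL1 : Real.log 2 ≤ Real.log (M / U r) := by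
          refine Real.log_le_log (by norm_num) ?_
          rw [le_div_iff₀ hUpos]; linarith
        have hL2 : Real.log 2 * ((k₀ : ℝ) - k - 1) ≤ Real.log (M / U r) := by
          have e1 : Real.log 2 * ((k₀ : ℝ) - k - 1) = Real.log (2 ^ k₀ / 2 ^ (k + 1)) := by
            rw [Real.log_div (by positivity) (by positivity), Real.log_pow, Real.log_pow]
            push_cast
            ring
          rw [e1]
          refine Real.log_le_log (by positivity) ?_
          gcongr
        have hL3 : Real.log 2 * ((k₀ : ℝ) - k) / 2 ≤ Real.log (M / U r) := by nlinarith
        rw [div_le_iff₀ hS]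
        refine le_trans ?_ hc.le
        have hLnn : 0 ≤ Real.log 2 * ((k₀ : ℝ) - k) / 2 := by nlinarith
        gcongr
  have := key k₀ le_rfl
  rw [hsS] at this
  rw [pow_succ] at hM2
  linarith

/-- Two-sided region growing: growing from the inside or from the outside, whichever has at most
half of the total volume `M`, bounds the cut by an entropy of the volume split. -/
lemma grow_two (M : ℕ) (N R : ℝ) (U c : ℝ → ℝ) (hR : 0 < R) (hM : 2 ≤ M)
    (hN : ∀ k : ℕ, 2 ^ k ≤ M → ∑ j ∈ Finset.range k, (1 : ℝ) / (j + 1) ≤ N)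
    (hU1 : ∀ r, 0 ≤ r → r ≤ R → 1 ≤ U r) (hU2 : ∀ r, 0 ≤ r → r ≤ R → U r ≤ M - 1)
    (hmono : ∀ r s, 0 ≤ r → r ≤ s → s ≤ R → U r ≤ U s)
    (hgrow : ∀ a b γ, 0 ≤ a → a ≤ b → b ≤ R → (∀ r, a < r → r < b → γ ≤ c r) →
      γ * (b - a) ≤ 4 * U b)
    (hgrow' : ∀ a b γ, 0 ≤ a → a ≤ b → b ≤ R → (∀ r, a < r → r < b → γ ≤ c r) →
      γ * (b - a) ≤ 4 * (M - U a)) :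
    ∃ r, 0 < r ∧ r < R ∧
      c r * R ≤ 64 * N * (U r * Real.log (M / U r) + (M - U r) * Real.log (M / (M - U r))) := by
  obtain ⟨k, hk1, hk2⟩ : ∃ k : ℕ, 2 ^ k ≤ M ∧ M < 2 ^ (k + 1) :=
    ⟨Nat.log 2 M, Nat.pow_log_le_self 2 (by omega), Nat.lt_pow_succ_log_self (by norm_num) M⟩
  have hk : 1 ≤ k := by
    by_contra hk
    have : k = 0 := by omega
    subst this
    simp at hk2
    omega
  have hNk := hN k hk1
  have hk1' : (2 : ℝ) ^ k ≤ M := by exact_mod_cast hk1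
  have hk2' : (M : ℝ) < 2 ^ (k + 1) := by exact_mod_cast hk2
  have hN0 : 0 ≤ N := le_trans (Finset.sum_nonneg fun _ _ => by positivity) hNk
  have hent : ∀ u : ℝ, 1 ≤ u → u ≤ M - 1 → 0 ≤ u * Real.log (M / u) := fun u h1 h2 => by
    refine mul_nonneg (by linarith) (Real.log_nonneg ?_)
    rw [le_div_iff₀ (by linarith)]
    linarith
  rcases le_total (U (R / 2)) (M / 2) with h | h
  · obtain ⟨r, h0, h1, h2⟩ := grow_one M N (R / 2) k U c (by positivity) hk hk1' hk2' hNk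
      (fun r a b => hU1 r a (by linarith)) (fun r s a b d => hmono r s a b (by linarith)) h
      (fun a b γ h1 h2 h3 => hgrow a b γ h1 h2 (by linarith))
    refine ⟨r, h0, by linarith, ?_⟩
    have hr2 := hU2 r h0.le (by linarith)
    have hr1 := hU1 r h0.le (by linarith)
    have := hent (M - U r) (by linarith) (by linarith)
    have := mul_nonneg hN0 this
    nlinarith
  · obtain ⟨r, h0, h1, h2⟩ := grow_one M N (R / 2) k (fun r => M - U (R - r)) (fun r => c (R - r))
      (by positivity) hk hk1' hk2' hNk
      (fun r a b => by have := hU2 (R - r) (by linarith) (by linarith); linarith)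
      (fun r s a b d => by
        have := hmono (R - s) (R - r) (by linarith) (by linarith) (by linarith); linarith)
      (by rw [show R - R / 2 = R / 2 by ring]; linarith)
      (fun a b γ h1 h2 h3 h4 => by
        have := hgrow' (R - b) (R - a) γ (by linarith) (by linarith) (by linarith)
          (fun r ha hb => by
            have := h4 (R - r) (by linarith) (by linarith)
            rwa [sub_sub_cancel] at this)
        rwa [show R - a - (R - b) = b - a by ring] at this)
    refine ⟨R - r, by linarith, by linarith, ?_⟩
    have hr2 := hU2 (R - r) (by linarith) (by linarith)
    have hr1 := hU1 (R - r) (by linarith) (by linarith)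
    have := hent (U (R - r)) (by linarith) (by linarith)
    have := mul_nonneg hN0 this
    nlinarith

/-- The fraction of the interval from `x` to `y` lying below `r`, where a point that is at most
`r` counts in full even if the interval is degenerate. -/
noncomputable def frac (x y r : ℝ) : ℝ :=
  if r < min x y then 0 else if max x y ≤ r then 1 else (r - min x y) / (max x y - min x y)

lemma frac_mem (x y r : ℝ) : 0 ≤ frac x y r ∧ frac x y r ≤ 1 := by
  unfold frac
  split_ifs with h1 h2
  · simp
  · simp
  · push Not at h1 h2
    have : 0 < max x y - min x y := by linarith
    exact ⟨div_nonneg (by linarith) this.le, (div_le_one this).2 (by linarith)⟩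

lemma frac_mono (x y : ℝ) {r s : ℝ} (h : r ≤ s) : frac x y r ≤ frac x y s := by
  by_cases h1 : r < min x y
  · rw [show frac x y r = 0 by simp only [frac, if_pos h1]]
    exact (frac_mem x y s).1
  have h1' : ¬ s < min x y := by linarith
  by_cases h2 : max x y ≤ s
  · rw [show frac x y s = 1 by simp only [frac, if_neg h1', if_pos h2]]
    exact (frac_mem x y r).2
  have h2' : ¬ max x y ≤ r := by linarith
  have : 0 < max x y - min x y := by linarith
  simp only [frac, if_neg h1, if_neg h1', if_neg h2, if_neg h2']
  gcongr

/-- The indicator that the level `r` separates `x` from `y`. -/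
noncomputable def sep (x y r : ℝ) : ℝ := (Set.Ico (min x y) (max x y)).indicator 1 r

lemma sep_eq (x y r : ℝ) : sep x y r = if (x ≤ r ↔ y ≤ r) then 0 else 1 := by
  unfold sep
  rw [Set.indicator_apply]
  simp only [Set.mem_Ico, Pi.one_apply, min_le_iff, lt_max_iff]
  by_cases h1 : x ≤ r <;> by_cases h2 : y ≤ r <;> simp [h1, h2]

open MeasureTheory in
lemma sep_integral (x y a b : ℝ) (hab : a ≤ b) :
    IntervalIntegrable (sep x y) volume a b ∧
    ∫ r in a..b, sep x y r = max 0 (min b (max x y) - max a (min x y)) := by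
  have hInt : Integrable (sep x y) volume := by
    refine (integrable_indicator_iff measurableSet_Ico).2 ?_
    exact integrableOn_const (hs := by simp) (hC := by simp)
  refine ⟨hInt.intervalIntegrable, ?_⟩
  rw [intervalIntegral.integral_of_le hab, ← integral_Ico_eq_integral_Ioc]
  unfold sep
  rw [setIntegral_indicator measurableSet_Ico, Set.Ico_inter_Ico]
  simp only [Pi.one_apply, integral_const, smul_eq_mul, mul_one]
  simp [Measure.real, Real.volume_Ico, ENNReal.toReal_ofReal', max_comm]

/-- The part of the interval between `x` and `y` that lies in `[a, b]` is contained both in its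
part below `b` and in its part above `a`. -/
lemma sep_overlap (x y a b : ℝ) :
    max 0 (min b (max x y) - max a (min x y)) ≤ |x - y| * frac x y b ∧
    max 0 (min b (max x y) - max a (min x y)) ≤ |x - y| * (1 - frac x y a) := by
  have hxy : |x - y| = max x y - min x y := by rw [max_sub_min_eq_abs, abs_sub_comm]
  have hle : min x y ≤ max x y := min_le_max
  rw [hxy]
  generalize hm : min x y = m at *
  generalize hM : max x y = M' at *
  have e1 := min_le_left b M'
  have e2 := min_le_right b M'
  have e3 := le_max_left a m
  have e4 := le_max_right a m
  unfold frac
  rw [hm, hM]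
  constructor
  · split_ifs with h1 h2
    · rw [max_le_iff]; constructor <;> linarith
    · rw [max_le_iff]; constructor <;> linarith
    · push Not at h1 h2
      have : 0 < M' - m := by linarith
      rw [mul_div_cancel₀ _ this.ne', max_le_iff]
      constructor <;> linarith
  · split_ifs with h1 h2
    · rw [max_le_iff]; constructor <;> linarith
    · rw [max_le_iff]; constructor <;> linarith
    · push Not at h1 h2
      have : 0 < M' - m := by linarith
      rw [mul_sub, mul_div_cancel₀ _ this.ne', max_le_iff]
      constructor <;> linarith

/-- A family of edges `e` with end levels `x e`, `y e` at most `4 * l e` apart: if the separated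
edges have total weight at least `γ` throughout `(a, b)`, then the volume of the edges below `b`,
and also that above `a`, is at least `γ * (b - a) / 4`. -/
lemma cut_growth {ι : Type} (E : Finset ι) (x y l : ι → ℝ) (hl : ∀ e ∈ E, 0 < l e)
    (hxy : ∀ e ∈ E, |x e - y e| ≤ 4 * l e) (a b γ : ℝ) (hab : a ≤ b)
    (hγ : ∀ r, a < r → r < b → γ ≤ ∑ e ∈ E, sep (x e) (y e) r / l e) :
    γ * (b - a) ≤ 4 * ∑ e ∈ E, frac (x e) (y e) b ∧
    γ * (b - a) ≤ 4 * ∑ e ∈ E, (1 - frac (x e) (y e) a) := by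
  have h1 : γ * (b - a) ≤ ∑ e ∈ E,
      max 0 (min b (max (x e) (y e)) - max a (min (x e) (y e))) / l e := by
    have hi : ∀ e ∈ E, IntervalIntegrable (fun r => sep (x e) (y e) r / l e)
        MeasureTheory.volume a b := fun e _ => (sep_integral _ _ _ _ hab).1.div_const _
    have : ∫ r in a..b, (fun _ => γ) r ≤ ∫ r in a..b, ∑ e ∈ E, sep (x e) (y e) r / l e := by
      refine intervalIntegral.integral_mono_on_of_le_Ioo hab (by simp) ?_ fun r hr => hγ r hr.1 hr.2
      have h := IntervalIntegrable.sum E hi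
      rwa [show (∑ e ∈ E, fun r => sep (x e) (y e) r / l e) =
        fun r => ∑ e ∈ E, sep (x e) (y e) r / l e by ext r; simp] at h
    rw [intervalIntegral.integral_const, intervalIntegral.integral_finsetSum hi, smul_eq_mul,
      mul_comm] at this
    refine this.trans_eq (Finset.sum_congr rfl fun e he => ?_)
    rw [intervalIntegral.integral_div, (sep_integral _ _ _ _ hab).2]
  constructor <;> refine h1.trans ?_ <;> rw [Finset.mul_sum] <;>
    refine Finset.sum_le_sum fun e he => ?_ <;> rw [div_le_iff₀ (hl e he)]
  · refine (sep_overlap _ _ _ _).1.trans ?_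
    have := mul_le_mul_of_nonneg_right (hxy e he) (frac_mem (x e) (y e) b).1
    linarith
  · refine (sep_overlap _ _ _ _).2.trans ?_
    have := mul_le_mul_of_nonneg_right (hxy e he) (sub_nonneg.2 (frac_mem (x e) (y e) a).2)
    linarith

/-- Splitting a cluster of volume `M` into parts of volumes at most `u` and `M - u` releases the
entropy of the split from the potential `x * log x`. -/
lemma entropy_split {M u a b : ℝ} (ha : 1 ≤ a) (hb : 1 ≤ b) (hau : a ≤ u) (hbu : b ≤ M - u) :
    a * Real.log a + b * Real.log b +
      (u * Real.log (M / u) + (M - u) * Real.log (M / (M - u))) ≤ M * Real.log M := by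
  have h1 : a * Real.log a ≤ u * Real.log u :=
    mul_le_mul hau (Real.log_le_log (by linarith) hau) (Real.log_nonneg ha) (by linarith)
  have h2 : b * Real.log b ≤ (M - u) * Real.log (M - u) :=
    mul_le_mul hbu (Real.log_le_log (by linarith) hbu) (Real.log_nonneg hb) (by linarith)
  rw [Real.log_div (by linarith) (by linarith), Real.log_div (by linarith) (by linarith)]
  linarith

end Growing

/-! ### Volumes, and trees of a cluster -/

section Recursion

variable {V : Type}

open Classical in
/-- The ordered pairs of adjacent vertices of a cluster; every edge is listed twice. -/
noncomputable def pairs (G : SimpleGraph V) (X : Finset V) : Finset (V × V) :=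
  (X ×ˢ X).filter fun e => G.Adj e.1 e.2

/-- The volume of a cluster: its vertices plus its ordered adjacent pairs. -/
noncomputable def vol (G : SimpleGraph V) (X : Finset V) : ℕ := X.card + (pairs G X).card

open Classical in
/-- The lengths `ℓ₀` with the edges in `H` shortened to one half. -/
noncomputable def halve (ℓ₀ : V → V → ℝ) (H : Set (Sym2 V)) (u v : V) : ℝ :=
  if s(u, v) ∈ H then ℓ₀ u v / 2 else ℓ₀ u v

lemma mem_pairs {G : SimpleGraph V} {X : Finset V} {e : V × V} :
    e ∈ pairs G X ↔ InAdj G X e.1 e.2 := by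
  simp only [pairs, Finset.mem_filter, Finset.mem_product, InAdj]
  tauto

open Classical in
lemma pairs_filter {G : SimpleGraph V} {X W : Finset V} (h : W ⊆ X) :
    pairs G W = (pairs G X).filter fun e => e.1 ∈ W ∧ e.2 ∈ W := by
  ext e
  simp only [Finset.mem_filter, mem_pairs, InAdj]
  have h1 := @h e.1
  have h2 := @h e.2
  tauto

lemma vol_mono {G : SimpleGraph V} {X W : Finset V} (h : W ⊆ X) : vol G W ≤ vol G X := by
  classical
  unfold vol
  rw [pairs_filter h]
  exact add_le_add (Finset.card_le_card h) (Finset.card_filter_le _ _)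

/-- Some sublevel set of an edgewise `4`-Lipschitz function `f` has a cheap boundary. -/
lemma exists_level (G : SimpleGraph V) (X : Finset V) (l : V → V → ℝ) (f : V → ℝ) (N R : ℝ)
    (hl : ∀ u v, InAdj G X u v → 0 < l u v)
    (hf : ∀ u v, InAdj G X u v → |f u - f v| ≤ 4 * l u v) (hR : 0 < R)
    (hN : ∀ k : ℕ, 2 ^ k ≤ vol G X → ∑ j ∈ Finset.range k, (1 : ℝ) / (j + 1) ≤ N)
    {t x₀ : V} (ht : t ∈ X) (hft : f t ≤ 0) (hx₀ : x₀ ∈ X) (hfx₀ : R < f x₀) :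
    ∃ r u : ℝ, 0 < r ∧ r < R ∧ (∀ W Y : Finset V, (∀ x, x ∈ W ↔ x ∈ X ∧ f x ≤ r) →
        (∀ x, x ∈ Y ↔ x ∈ X ∧ r < f x) → (vol G W : ℝ) ≤ u ∧ (vol G Y : ℝ) ≤ vol G X - u) ∧
      (∑ e ∈ pairs G X, sep (f e.1) (f e.2) r / l e.1 e.2) * R ≤
        64 * N * (u * Real.log (vol G X / u) +
          (vol G X - u) * Real.log (vol G X / (vol G X - u))) := by
  classical
  let U : ℝ → ℝ := fun r => ((X.filter fun x => f x ≤ r).card : ℝ) +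
    ∑ e ∈ pairs G X, frac (f e.1) (f e.2) r
  let c : ℝ → ℝ := fun r => ∑ e ∈ pairs G X, sep (f e.1) (f e.2) r / l e.1 e.2
  have hU2 : ∀ r, vol G X - U r = ((X.filter fun x => ¬ f x ≤ r).card : ℝ) +
      ∑ e ∈ pairs G X, (1 - frac (f e.1) (f e.2) r) := by
    intro r
    have := Finset.card_filter_add_card_filter_not (s := X) (fun x => f x ≤ r)
    have : (X.card : ℝ) = (X.filter fun x => f x ≤ r).card + (X.filter fun x => ¬ f x ≤ r).card := by
      exact_mod_cast this.symm
    simp only [vol, U, Finset.sum_sub_distrib]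
    push_cast
    rw [this]
    simp
    ring
  have hnn : ∀ r, 0 ≤ ∑ e ∈ pairs G X, frac (f e.1) (f e.2) r := fun r =>
    Finset.sum_nonneg fun e _ => (frac_mem _ _ _).1
  have hnn' : ∀ r, 0 ≤ ∑ e ∈ pairs G X, (1 - frac (f e.1) (f e.2) r) := fun r =>
    Finset.sum_nonneg fun e _ => sub_nonneg.2 (frac_mem _ _ _).2
  have hgr := fun a b γ (hab : a ≤ b) h => cut_growth (pairs G X) (fun e => f e.1) (fun e => f e.2)
    (fun e => l e.1 e.2) (fun e he => hl _ _ (mem_pairs.1 he)) (fun e he => hf _ _ (mem_pairs.1 he))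
    a b γ hab h
  have hne : t ≠ x₀ := by rintro rfl; linarith
  have hgrow : ∃ r, 0 < r ∧ r < R ∧ c r * R ≤ 64 * N * (U r * Real.log (vol G X / U r) +
      (vol G X - U r) * Real.log (vol G X / (vol G X - U r))) := by
    refine grow_two (vol G X) N R U c hR ?_ hN ?_ ?_ ?_ ?_ ?_
    · have : 1 < X.card := Finset.one_lt_card.2 ⟨t, ht, x₀, hx₀, hne⟩
      unfold vol
      omega
    · intro r hr _
      have : 1 ≤ (X.filter fun x => f x ≤ r).card := Finset.card_pos.2 ⟨t, by simp [ht]; linarith⟩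
      have : (1 : ℝ) ≤ (X.filter fun x => f x ≤ r).card := by exact_mod_cast this
      have := hnn r
      simp only [U]
      linarith
    · intro r _ hr
      have : 1 ≤ (X.filter fun x => ¬ f x ≤ r).card := Finset.card_pos.2 ⟨x₀, by simp [hx₀]; linarith⟩
      have : (1 : ℝ) ≤ (X.filter fun x => ¬ f x ≤ r).card := by exact_mod_cast this
      have := hnn' r
      have := hU2 r
      linarith
    · intro r s _ hrs _
      refine add_le_add ?_ (Finset.sum_le_sum fun e _ => frac_mono _ _ hrs)
      exact_mod_cast Finset.card_le_card fun x hx => by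
        simp only [Finset.mem_filter] at hx ⊢
        exact ⟨hx.1, hx.2.trans hrs⟩
    · intro a b γ _ hab _ h
      refine (hgr a b γ hab h).1.trans ?_
      have : (0 : ℝ) ≤ (X.filter fun x => f x ≤ b).card := by positivity
      simp only [U]
      linarith
    · intro a b γ _ hab _ h
      refine (hgr a b γ hab h).2.trans ?_
      have : (0 : ℝ) ≤ (X.filter fun x => ¬ f x ≤ a).card := by positivity
      have := hU2 a
      linarith
  obtain ⟨r, hr0, hrR, hr⟩ := hgrow
  refine ⟨r, U r, hr0, hrR, fun W Y hW hY => ⟨?_, ?_⟩, hr⟩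
  · have hWe : W = X.filter fun x => f x ≤ r := by ext x; simp [hW]
    have hsub : W ⊆ X := fun x hx => ((hW x).1 hx).1
    simp only [vol, U, hWe]
    rw [← hWe, pairs_filter hsub, Finset.card_filter]
    push_cast
    refine add_le_add le_rfl (Finset.sum_le_sum fun e _ => ?_)
    split_ifs with h
    · unfold frac
      have h1 := ((hW _).1 h.1).2
      have h2 := ((hW _).1 h.2).2
      rw [if_neg (by simp [h1]), if_pos (by simp [h1, h2])]
    · exact (frac_mem _ _ _).1
  · have hYe : Y = X.filter fun x => ¬ f x ≤ r := by ext x; simp [hY]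
    have hsub : Y ⊆ X := fun x hx => ((hY x).1 hx).1
    rw [hU2]
    simp only [vol]
    rw [← hYe, pairs_filter hsub, Finset.card_filter]
    push_cast
    refine add_le_add le_rfl (Finset.sum_le_sum fun e _ => ?_)
    split_ifs with h
    · unfold frac
      have h1 := ((hY _).1 h.1).2
      have h2 := ((hY _).1 h.2).2
      rw [if_pos (by simp [h1, h2])]
      simp
    · exact sub_nonneg.2 (frac_mem _ _ _).2

/-- The output of the construction on a cluster `X` with root `x₀`, distances `D` in the current
lengths, and protected path `P`.  All lengths of walks in the tree are original lengths; `σ u v`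
bounds the tree distance between adjacent `u` and `v`. -/
structure IsTreeFor (G : SimpleGraph V) (ℓ₀ : V → V → ℝ) (N : ℝ) (X : Finset V) (x₀ : V)
    (D : V → ℝ) (P : Finset V) (pr : V → V) (T : SimpleGraph V) (σ : V → V → ℝ) : Prop where
  le : ∀ u v, T.Adj u v → InAdj G X u v
  card : T.edgeSet.ncard + 1 ≤ X.card
  path : ∀ p ∈ P, p ≠ x₀ → T.Adj (pr p) p
  dist : ∀ x ∈ X, Reach T.Adj ℓ₀ x₀ x (4 * D x)
  str : ∀ u v, InAdj G X u v → Reach T.Adj ℓ₀ u v (σ u v)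
  cost : ∑ e ∈ pairs G X, σ e.1 e.2 / ℓ₀ e.1 e.2 ≤
    4096 * N * (vol G X * Real.log (vol G X))

/-- Joining the trees of the petal `W` and of its complement `Y` by the edge from `y₁` to `x₁`. -/
lemma glue [Finite V] {G : SimpleGraph V} {ℓ₀ : V → V → ℝ} {N : ℝ} {X W Y : Finset V} {f : V → ℝ}
    {x₀ x₁ y₁ : V} {D DW : V → ℝ} {P PW PY : Finset V} {pr prW : V → V} {TW TY : SimpleGraph V}
    {σW σY : V → V → ℝ} {r u Δ a : ℝ}
    (hsym : ∀ u v, ℓ₀ u v = ℓ₀ v u)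
    (hN0 : 0 ≤ N) (hW : ∀ x, x ∈ W ↔ x ∈ X ∧ f x ≤ r) (hY : ∀ x, x ∈ Y ↔ x ∈ X ∧ r < f x)
    (hTW : IsTreeFor G ℓ₀ N W x₁ DW PW prW TW σW) (hTY : IsTreeFor G ℓ₀ N Y x₀ D PY pr TY σY)
    (hx₁ : x₁ ∈ W) (hy₁ : y₁ ∈ Y) (hadj : G.Adj y₁ x₁)
    (hpath : ∀ p ∈ P, p ≠ x₀ → TW.Adj (pr p) p ∨ TY.Adj (pr p) p ∨ (p = x₁ ∧ pr p = y₁))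
    (hDΔ : ∀ x ∈ X, D x ≤ Δ) (ha : Reach TY.Adj ℓ₀ x₀ y₁ a)
    (hdist : ∀ x ∈ W, a + ℓ₀ y₁ x₁ + 4 * DW x ≤ 4 * D x)
    (hvW : (vol G W : ℝ) ≤ u) (hvY : (vol G Y : ℝ) ≤ vol G X - u)
    (hcut : (∑ e ∈ pairs G X, sep (f e.1) (f e.2) r / ℓ₀ e.1 e.2) * (Δ / 8) ≤
        64 * N * (u * Real.log (vol G X / u) +
          (vol G X - u) * Real.log (vol G X / (vol G X - u)))) :
    ∃ T σ, IsTreeFor G ℓ₀ N X x₀ D P pr T σ := by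
  classical
  have hWX : W ⊆ X := fun x hx => ((hW x).1 hx).1
  have hYX : Y ⊆ X := fun x hx => ((hY x).1 hx).1
  have hWY : ∀ x ∈ X, x ∉ Y ↔ x ∈ W := fun x hx => by simp [hW, hY, hx]
  have hdisj : ∀ x ∈ W, x ∉ Y := fun x hx => (hWY x (hWX hx)).2 hx
  have hsep : y₁ ≠ x₁ := by rintro rfl; exact hdisj _ hx₁ hy₁
  let T : SimpleGraph V := TW ⊔ TY ⊔ SimpleGraph.edge y₁ x₁
  have hTWT : ∀ u v, TW.Adj u v → T.Adj u v := fun u v h => Or.inl (Or.inl h)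
  have hTYT : ∀ u v, TY.Adj u v → T.Adj u v := fun u v h => Or.inl (Or.inr h)
  have hE : T.Adj y₁ x₁ := Or.inr (by simp [SimpleGraph.edge_adj, hsep])
  have hd : ∀ x ∈ X, Reach T.Adj ℓ₀ x₀ x (4 * D x) := by
    intro x hx
    by_cases hxY : x ∈ Y
    · exact (hTY.dist x hxY).map_le hTYT fun _ _ _ => le_rfl
    · have hxW := (hWY x hx).1 hxY
      have h1 : Reach T.Adj ℓ₀ x₀ y₁ a := ha.map_le hTYT fun _ _ _ => le_rfl
      have h2 : Reach T.Adj ℓ₀ x₁ x (4 * DW x) :=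
        (hTW.dist x hxW).map_le hTWT fun _ _ _ => le_rfl
      exact ((h1.trans (.single hE le_rfl)).trans h2).mono (hdist x hxW)
  refine ⟨T, fun v x => if v ∈ W ∧ x ∈ W then σW v x else if v ∈ Y ∧ x ∈ Y then σY v x
    else 8 * Δ, ?_, ?_, ?_, hd, ?_, ?_⟩
  · rintro v x ((h | h) | h)
    · have := hTW.le _ _ h
      exact ⟨this.1, hWX this.2.1, hWX this.2.2⟩
    · have := hTY.le _ _ h
      exact ⟨this.1, hYX this.2.1, hYX this.2.2⟩
    · rw [SimpleGraph.edge_adj] at h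
      rcases h.1 with ⟨rfl, rfl⟩ | ⟨rfl, rfl⟩
      · exact ⟨hadj, hYX hy₁, hWX hx₁⟩
      · exact ⟨hadj.symm, hWX hx₁, hYX hy₁⟩
  · have h1 : T.edgeSet.ncard ≤ TW.edgeSet.ncard + TY.edgeSet.ncard + 1 := by
      simp only [T, SimpleGraph.edgeSet_sup]
      refine (Set.ncard_union_le _ _).trans (add_le_add (Set.ncard_union_le _ _) ?_)
      rw [SimpleGraph.edgeSet_edge_of_ne hsep, Set.ncard_singleton]
    have h2 : W.card + Y.card ≤ X.card := by
      rw [← Finset.card_union_of_disjoint (Finset.disjoint_left.2 hdisj)]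
      exact Finset.card_le_card (Finset.union_subset hWX hYX)
    have := hTW.card
    have := hTY.card
    omega
  · intro p hp h0
    rcases hpath p hp h0 with h | h | ⟨rfl, h⟩
    · exact hTWT _ _ h
    · exact hTYT _ _ h
    · rw [h]; exact hE
  · intro v x h
    split_ifs with h1 h2
    · exact (hTW.str v x ⟨h.1, h1⟩).map_le hTWT fun _ _ _ => le_rfl
    · exact (hTY.str v x ⟨h.1, h2⟩).map_le hTYT fun _ _ _ => le_rfl
    · have h3 := ((hd v h.2.1).symm (fun _ _ h => h.symm) hsym).trans (hd x h.2.2)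
      refine h3.mono ?_
      have := hDΔ v h.2.1
      have := hDΔ x h.2.2
      linarith
  · have hsplit : ∑ e ∈ pairs G X, (if e.1 ∈ W ∧ e.2 ∈ W then σW e.1 e.2 else
        if e.1 ∈ Y ∧ e.2 ∈ Y then σY e.1 e.2 else 8 * Δ) / ℓ₀ e.1 e.2 =
        ∑ e ∈ pairs G W, σW e.1 e.2 / ℓ₀ e.1 e.2 + ∑ e ∈ pairs G Y, σY e.1 e.2 / ℓ₀ e.1 e.2 +
        8 * Δ * ∑ e ∈ pairs G X, sep (f e.1) (f e.2) r / ℓ₀ e.1 e.2 := by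
      rw [pairs_filter hWX, pairs_filter hYX, Finset.sum_filter, Finset.sum_filter, Finset.mul_sum,
        ← Finset.sum_add_distrib, ← Finset.sum_add_distrib]
      refine Finset.sum_congr rfl fun e he => ?_
      obtain ⟨_, h1, h2⟩ := mem_pairs.1 he
      rw [sep_eq]
      simp only [hW, hY, h1, h2, true_and, ← not_le]
      by_cases h3 : f e.1 ≤ r <;> by_cases h4 : f e.2 ≤ r <;> simp [h3, h4, div_eq_mul_inv]
    rw [hsplit]
    have hW1 : (1 : ℝ) ≤ vol G W := by
      have : 0 < W.card := Finset.card_pos.2 ⟨x₁, hx₁⟩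
      exact_mod_cast (show 1 ≤ vol G W by unfold vol; omega)
    have hY1 : (1 : ℝ) ≤ vol G Y := by
      have : 0 < Y.card := Finset.card_pos.2 ⟨y₁, hy₁⟩
      exact_mod_cast (show 1 ≤ vol G Y by unfold vol; omega)
    have hent := mul_le_mul_of_nonneg_left (entropy_split hW1 hY1 hvW hvY)
      (show 0 ≤ 4096 * N by positivity)
    have := hTW.cost
    have := hTY.cost
    linarith

end Recursion

/-! ### The recursion -/

section Construction

variable {V : Type}

lemma InAdj.of_subset {G : SimpleGraph V} {X W : Finset V} (h : W ⊆ X) {u v : V}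
    (huv : InAdj G W u v) : InAdj G X u v :=
  ⟨huv.1, h huv.2.1, h huv.2.2⟩

lemma halve_symm {ℓ₀ : V → V → ℝ} (hsym : ∀ u v, ℓ₀ u v = ℓ₀ v u) (H : Set (Sym2 V)) (u v : V) :
    halve ℓ₀ H u v = halve ℓ₀ H v u := by
  unfold halve
  rw [Sym2.eq_swap, hsym]

lemma halve_bounds {ℓ₀ : V → V → ℝ} (H : Set (Sym2 V)) {u v : V} (h : 0 < ℓ₀ u v) :
    0 < halve ℓ₀ H u v ∧ halve ℓ₀ H u v ≤ ℓ₀ u v ∧ ℓ₀ u v ≤ 2 * halve ℓ₀ H u v := by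
  unfold halve
  split_ifs <;> refine ⟨?_, ?_, ?_⟩ <;> linarith

/-- The main recursion.  The edges of `H` are those halved so far that still lie in the cluster,
and all of them lie on the protected path `P`.  If the end of `P` is far from the root, the petal
is grown around `P` itself, and `P` is divided between the two parts.  Otherwise the petal is
grown around a shortest path to a farthest vertex; it misses `P`, and within the petal the edges
of the new path are halved. -/
lemma exists_treeFor [Finite V] {G : SimpleGraph V} {ℓ₀ : V → V → ℝ} {N : ℝ}
    (hpos : ∀ u v, G.Adj u v → 0 < ℓ₀ u v) (hsym : ∀ u v, ℓ₀ u v = ℓ₀ v u) (hN0 : 0 ≤ N) :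
    ∀ (n : ℕ) (X : Finset V), X.card = n →
    (∀ k : ℕ, 2 ^ k ≤ vol G X → ∑ j ∈ Finset.range k, (1 : ℝ) / (j + 1) ≤ N) →
    ∀ (H : Set (Sym2 V)) (x₀ : V) (D : V → ℝ) (t : V) (P : Finset V) (pr : V → V),
      IsDist G X (halve ℓ₀ H) x₀ D → SPath G X (halve ℓ₀ H) D x₀ t P pr →
      (∀ u v, InAdj G X u v → s(u, v) ∈ H → ∃ p ∈ P, p ≠ x₀ ∧ s(pr p, p) = s(u, v)) →
      ∃ T σ, IsTreeFor G ℓ₀ N X x₀ D P pr T σ := by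
  classical
  intro n
  induction n using Nat.strong_induction_on with
  | _ n ih =>
  rintro X rfl hN H x₀ D t P pr hD hP hH
  by_cases hX : X = {x₀}
  · subst hX
    have hnone : ∀ u v, ¬ InAdj G {x₀} u v := by
      rintro u v ⟨h, hu, hv⟩
      rw [Finset.mem_singleton.1 hu, Finset.mem_singleton.1 hv] at h
      exact G.irrefl h
    have hpe : pairs G {x₀} = ∅ := Finset.eq_empty_of_forall_notMem fun e he =>
      hnone _ _ (mem_pairs.1 he)
    refine ⟨⊥, fun _ _ => 0, by simp, by simp, fun p hp h0 => ?_, fun x hx => ?_,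
      fun u v h => (hnone u v h).elim, by simp [vol, hpe]⟩
    · exact (h0 (Finset.mem_singleton.1 (hP.sub hp))).elim
    · rw [Finset.mem_singleton.1 hx, hD.root]
      exact .refl _ (by simp)
  have hp0 : ∀ u v, InAdj G X u v → 0 < ℓ₀ u v := fun u v h => hpos u v h.1
  have hpℓ : ∀ u v, InAdj G X u v → 0 < halve ℓ₀ H u v := fun u v h =>
    (halve_bounds H (hp0 u v h)).1
  have hsℓ := halve_symm hsym H
  obtain ⟨z, hz, hmax⟩ := X.exists_max_image D ⟨x₀, hD.mem⟩
  have hz0 : z ≠ x₀ := by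
    rintro rfl
    refine hX (Finset.eq_singleton_iff_unique_mem.2 ⟨hz, fun y hy => ?_⟩)
    by_contra hne
    obtain ⟨u, hu, he⟩ := hD.tight y hy hne
    have := hpℓ _ _ hu
    have := hD.nonneg hpℓ u hu.2.1
    have := hmax y hy
    have := hD.root
    linarith
  have hΔ : 0 < D z := by
    obtain ⟨u, hu, he⟩ := hD.tight z hz hz0
    have := hpℓ _ _ hu
    have := hD.nonneg hpℓ u hu.2.1
    linarith
  -- a petal of cheap boundary around an arbitrary shortest path to a far away vertex
  have hlevel : ∀ (t : V) (P : Finset V) (pr : V → V) (f : V → ℝ),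
      SPath G X (halve ℓ₀ H) D x₀ t P pr → IsPetal G X (halve ℓ₀ H) D t P f →
      D z / 8 < D t → ∃ r u : ℝ, 0 < r ∧ r < D z / 8 ∧
      (∀ W Y : Finset V, (∀ x, x ∈ W ↔ x ∈ X ∧ f x ≤ r) →
        (∀ x, x ∈ Y ↔ x ∈ X ∧ r < f x) → (vol G W : ℝ) ≤ u ∧ (vol G Y : ℝ) ≤ vol G X - u) ∧
      (∑ e ∈ pairs G X, sep (f e.1) (f e.2) r / ℓ₀ e.1 e.2) * (D z / 8) ≤
        64 * N * (u * Real.log (vol G X / u) +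
          (vol G X - u) * Real.log (vol G X / (vol G X - u))) := by
    intro t P pr f hP hf hlt
    refine exists_level G X ℓ₀ f N (D z / 8) hp0 (fun u v h => ?_) (by linarith) hN
      (t := t) (x₀ := x₀) (hP.sub hP.tgt) ?_ hD.mem ?_
    · have h1 := hf.lip u v h
      have h2 := hf.lip v u h.symm
      have h3 := (halve_bounds H (hp0 u v h)).2.1
      rw [hsℓ v u] at h2
      rw [abs_le]
      constructor <;> linarith
    · rw [hf.path t hP.tgt]; linarith
    · rw [hf.path x₀ hP.root, hD.root]; linarith
  by_cases hcase : 3 / 4 * D z ≤ D t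
  · obtain ⟨f, hf⟩ := exists_petal hpℓ hsℓ hD hP
    obtain ⟨r, u, hr0, hrR, hvol, hcut⟩ := hlevel t P pr f hP hf (by linarith)
    let W := X.filter fun x => f x ≤ r
    let Y := X.filter fun x => r < f x
    have hW : ∀ x, x ∈ W ↔ x ∈ X ∧ f x ≤ r := by simp [W]
    have hY : ∀ x, x ∈ Y ↔ x ∈ X ∧ r < f x := by simp [Y]
    have hWX : W ⊆ X := Finset.filter_subset _ _
    have hYX : Y ⊆ X := Finset.filter_subset _ _
    have hdisj : ∀ x ∈ W, x ∉ Y := fun x hx hx' => by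
      have := ((hW x).1 hx).2
      have := ((hY x).1 hx').2
      linarith
    have hPW : ∀ x, x ∈ P ∩ W ↔ x ∈ P ∧ x ∈ W := fun x => Finset.mem_inter
    have hPY : ∀ x, x ∈ P ∩ Y ↔ x ∈ P ∧ x ∈ Y := fun x => Finset.mem_inter
    obtain ⟨x₁, hx₁, hx10, hy₁, hDx₁, hDy₁, hDY, hPYs, hWs⟩ :=
      petal_cut hpℓ hD hP hf hr0.le (by linarith) hW hY hPW hPY
    -- within the petal the lengths are left unchanged
    obtain ⟨DW, hDW, hPWs, hDWle⟩ := hWs 1 (halve ℓ₀ H) one_pos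
      (fun u v _ => by simp) (fun p _ _ => by simp)
    have hx₁P := ((hPW _).1 hx₁).1
    have hx₁W := ((hPW _).1 hx₁).2
    have hy₁Y := ((hPY _).1 hy₁).2
    have hcW : W.card < X.card := Finset.card_lt_card
      ((Finset.ssubset_iff_of_subset hWX).2 ⟨_, hYX hy₁Y, fun h => hdisj _ h hy₁Y⟩)
    have hcY : Y.card < X.card := Finset.card_lt_card
      ((Finset.ssubset_iff_of_subset hYX).2 ⟨_, hWX hx₁W, hdisj _ hx₁W⟩)
    obtain ⟨TW, σW, hTW⟩ := ih _ hcW W rfl (fun k hk => hN k (hk.trans (vol_mono hWX)))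
      H x₁ DW t (P ∩ W) pr hDW hPWs (fun a b hab hm => by
        obtain ⟨p, hp, hp0, he⟩ := hH a b (hab.of_subset hWX) hm
        have hmem : pr p ∈ W ∧ p ∈ W := by
          rcases Sym2.eq_iff.1 he with ⟨h1, h2⟩ | ⟨h1, h2⟩
          · rw [h1, h2]; exact hab.2
          · rw [h1, h2]; exact hab.2.symm
        refine ⟨p, (hPW p).2 ⟨hp, hmem.2⟩, ?_, he⟩
        rintro rfl
        exact hdisj _ hmem.1 hy₁Y)
    obtain ⟨TY, σY, hTY⟩ := ih _ hcY Y rfl (fun k hk => hN k (hk.trans (vol_mono hYX)))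
      H x₀ D (pr x₁) (P ∩ Y) pr hDY hPYs (fun a b hab hm => by
        obtain ⟨p, hp, hp0, he⟩ := hH a b (hab.of_subset hYX) hm
        refine ⟨p, (hPY p).2 ⟨hp, ?_⟩, hp0, he⟩
        rcases Sym2.eq_iff.1 he with ⟨h1, h2⟩ | ⟨h1, h2⟩
        · rw [h2]; exact hab.2.2
        · rw [h2]; exact hab.2.1)
    have hpX : ∀ p ∈ P, p ≠ x₀ → InAdj G X (pr p) p := fun p hp h0 =>
      ⟨hP.pr_adj p hp h0, hP.sub (hP.pr_mem p hp h0), hP.sub hp⟩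
    -- the way from the root to the petal follows the protected path
    have ha : Reach TY.Adj ℓ₀ x₀ (pr x₁) (2 * D (pr x₁)) := by
      have := hPYs.reach (fun a b h => hpℓ a b (h.of_subset hYX)) (A := TY.Adj) (ℓ' := ℓ₀) (κ := 2)
        hPYs.root (fun p hp hlt => by
          have h0 : p ≠ x₀ := by rintro rfl; exact lt_irrefl _ hlt
          exact ⟨hTY.path p hp h0, (halve_bounds H (hp0 _ _ (hpX p ((hPY p).1 hp).1 h0))).2.2⟩)
        le_rfl (pr x₁) hy₁ (by rw [hD.root]; exact hD.nonneg hpℓ _ (hYX hy₁Y))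
      simpa [hD.root] using this
    have hv := hvol W Y hW hY
    refine glue (Δ := D z) hsym hN0 hW hY hTW hTY hx₁W hy₁Y (hP.pr_adj _ hx₁P hx10) ?_ hmax ha ?_
      hv.1 hv.2 hcut
    · intro p hp h0
      by_cases hpW : p ∈ W
      · by_cases hp1 : p = x₁
        · exact Or.inr (Or.inr ⟨hp1, by rw [hp1]⟩)
        · exact Or.inl (hTW.path p ((hPW p).2 ⟨hp, hpW⟩) hp1)
      · refine Or.inr (Or.inl (hTY.path p ((hPY p).2 ⟨hp, ?_⟩) h0))
        rw [hY]
        refine ⟨hP.sub hp, ?_⟩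
        by_contra hcon
        exact hpW ((hW p).2 ⟨hP.sub hp, not_lt.1 hcon⟩)
    · intro x hx
      obtain ⟨p, hp, hle⟩ := hDWle x hx
      have h1 := hP.le p ((hPW p).1 hp).1
      have h2 := ((hW x).1 hx).2
      have h3 := hP.pr_eq _ hx₁P hx10
      have h4 := (halve_bounds H (hp0 _ _ (hpX _ hx₁P hx10))).2.2
      linarith
  · obtain ⟨P', pr', hP'⟩ := exists_sPath hD hpℓ z hz
    obtain ⟨f, hf⟩ := exists_petal hpℓ hsℓ hD hP'
    obtain ⟨r, u, hr0, hrR, hvol, hcut⟩ := hlevel z P' pr' f hP' hf (by linarith)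
    let W := X.filter fun x => f x ≤ r
    let Y := X.filter fun x => r < f x
    have hW : ∀ x, x ∈ W ↔ x ∈ X ∧ f x ≤ r := by simp [W]
    have hY : ∀ x, x ∈ Y ↔ x ∈ X ∧ r < f x := by simp [Y]
    have hWX : W ⊆ X := Finset.filter_subset _ _
    have hYX : Y ⊆ X := Finset.filter_subset _ _
    have hdisj : ∀ x ∈ W, x ∉ Y := fun x hx hx' => by
      have := ((hW x).1 hx).2
      have := ((hY x).1 hx').2
      linarith
    have hPW : ∀ x, x ∈ P' ∩ W ↔ x ∈ P' ∧ x ∈ W := fun x => Finset.mem_inter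
    have hPY : ∀ x, x ∈ P' ∩ Y ↔ x ∈ P' ∧ x ∈ Y := fun x => Finset.mem_inter
    obtain ⟨x₁, hx₁, hx10, hy₁, hDx₁, hDy₁, hDY, -, hWs⟩ :=
      petal_cut hpℓ hD hP' hf hr0.le (by linarith) hW hY hPW hPY
    have hx₁P := ((hPW _).1 hx₁).1
    have hx₁W := ((hPW _).1 hx₁).2
    have hy₁Y := ((hPY _).1 hy₁).2
    have hcW : W.card < X.card := Finset.card_lt_card
      ((Finset.ssubset_iff_of_subset hWX).2 ⟨_, hYX hy₁Y, fun h => hdisj _ h hy₁Y⟩)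
    have hcY : Y.card < X.card := Finset.card_lt_card
      ((Finset.ssubset_iff_of_subset hYX).2 ⟨_, hWX hx₁W, hdisj _ hx₁W⟩)
    -- the old protected path stays in the complement of the petal
    have hPsub : P ⊆ Y := fun p hp => by
      rw [hY]
      refine ⟨hP.sub hp, ?_⟩
      have h1 := hP.le p hp
      have h2 := hf.ge p (hP.sub hp)
      linarith
    have hPYs : SPath G Y (halve ℓ₀ H) D x₀ t P pr :=
      ⟨hPsub, hP.root, hP.tgt, hP.le, hP.inj, hP.pr_mem, hP.pr_adj, hP.pr_eq, hP.chain⟩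
    have hWH : ∀ a b, InAdj G W a b → halve ℓ₀ H a b = ℓ₀ a b := fun a b hab => by
      unfold halve
      rw [if_neg]
      intro hm
      obtain ⟨p, hp, h0, he⟩ := hH a b (hab.of_subset hWX) hm
      have hpW : p ∈ W := by
        rcases Sym2.eq_iff.1 he with ⟨h1, h2⟩ | ⟨h1, h2⟩
        · rw [h2]; exact hab.2.2
        · rw [h2]; exact hab.2.1
      exact hdisj p hpW (hPsub hp)
    -- the part of the new path in the petal is contiguous, by the case of unchanged lengths
    have hprW : ∀ p ∈ P' ∩ W, p ≠ x₁ → InAdj G W (pr' p) p := fun p hp h1 => by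
      obtain ⟨_, _, h, _⟩ := hWs 1 (halve ℓ₀ H) one_pos (fun u v _ => by simp)
        (fun p _ _ => by simp)
      exact ⟨h.pr_adj p hp h1, h.sub (h.pr_mem p hp h1), h.sub hp⟩
    let H' : Set (Sym2 V) := {e | ∃ p ∈ P' ∩ W, p ≠ x₁ ∧ s(pr' p, p) = e}
    obtain ⟨DW, hDW, hPWs, hDWle⟩ := hWs (1 / 2) (halve ℓ₀ H') (by norm_num)
      (fun a b hab => by
        have h := halve_bounds H' (hpos a b hab.1)
        rw [hWH a b hab]
        constructor <;> linarith)
      (fun p hp h1 => by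
        have hm : s(pr' p, p) ∈ H' := ⟨p, hp, h1, rfl⟩
        rw [hWH _ _ (hprW p hp h1), halve, if_pos hm]
        ring)
    obtain ⟨TW, σW, hTW⟩ := ih _ hcW W rfl (fun k hk => hN k (hk.trans (vol_mono hWX)))
      H' x₁ DW z (P' ∩ W) pr' hDW hPWs (fun a b hab hm => hm)
    obtain ⟨TY, σY, hTY⟩ := ih _ hcY Y rfl (fun k hk => hN k (hk.trans (vol_mono hYX)))
      H x₀ D t P pr hDY hPYs (fun a b hab hm => hH a b (hab.of_subset hYX) hm)
    have hv := hvol W Y hW hY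
    refine glue (Δ := D z) hsym hN0 hW hY hTW hTY hx₁W hy₁Y (hP'.pr_adj _ hx₁P hx10)
      (fun p hp h0 => Or.inr (Or.inl (hTY.path p hp h0))) hmax (hTY.dist _ hy₁Y) ?_
      hv.1 hv.2 hcut
    intro x hx
    obtain ⟨p, hp, hle⟩ := hDWle x hx
    have h2 := ((hW x).1 hx).2
    have h3 := hP'.pr_eq _ hx₁P hx10
    have h4 := (halve_bounds H (hp0 _ _ ⟨hP'.pr_adj _ hx₁P hx10, hYX hy₁Y, hWX hx₁W⟩)).2.2
    linarith

end Construction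

/-! ### From the recursion to total stretch -/

section Final

variable {V : Type}

lemma Reach.exists_walk {T : SimpleGraph V} {ℓ : V → V → ℝ} {wt : Sym2 V → ℝ}
    (hwt : ∀ u v, wt s(u, v) = ℓ u v) {u v : V} {L : ℝ} (h : Reach T.Adj ℓ u v L) :
    ∃ p : T.Walk u v, (p.edges.map wt).sum ≤ L := by
  induction h with
  | refl L h => exact ⟨.nil, by simpa using h⟩
  | step b c L L' _ hA hL ih =>
    obtain ⟨p, hp⟩ := ih
    refine ⟨p.concat hA, ?_⟩
    rw [SimpleGraph.Walk.edges_concat]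
    simp [hwt]
    linarith

/-- In a forest the path between two vertices is at most as long as any walk between them. -/
lemma Reach.path_le {T : SimpleGraph V} (hT : T.IsAcyclic) {ℓ : V → V → ℝ} {wt : Sym2 V → ℝ}
    (hwt : ∀ u v, wt s(u, v) = ℓ u v) (h0 : ∀ e, 0 ≤ wt e) {u v : V} {L : ℝ}
    (h : Reach T.Adj ℓ u v L) (P : T.Walk u v) (hP : P.IsPath) :
    (P.edges.map wt).sum ≤ L := by
  classical
  obtain ⟨p, hp⟩ := h.exists_walk hwt
  have he : P = p.bypass :=
    congrArg Subtype.val ((hT.subsingleton_path u v).elim ⟨P, hP⟩ ⟨p.bypass, p.bypass_isPath⟩)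
  rw [he]
  refine le_trans ?_ hp
  refine List.Sublist.sum_le_sum (p.edges_bypass_sublist_edges.map wt) ?_
  intro a ha
  obtain ⟨e, _, rfl⟩ := List.mem_map.1 ha
  exact h0 e

lemma card_pairs [Fintype V] (G : SimpleGraph V) :
    (pairs G Finset.univ).card = 2 * G.edgeSet.ncard := by
  classical
  have h1 : pairs G Finset.univ =
      (Finset.univ : Finset G.Dart).map ⟨_, SimpleGraph.Dart.toProd_injective⟩ := by
    ext e
    simp only [mem_pairs, InAdj, Finset.mem_univ, and_true, Finset.mem_map, true_and,
      Function.Embedding.coeFn_mk]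
    exact ⟨fun h => ⟨⟨e, h⟩, rfl⟩, by rintro ⟨d, rfl⟩; exact d.adj⟩
  rw [h1, Finset.card_map, Finset.card_univ, SimpleGraph.dart_card_eq_twice_card_edges,
    Set.ncard_eq_toFinset_card', SimpleGraph.edgeFinset]

/-- The recursion applied to the whole vertex set, with nothing halved and a trivial protected path.
The edge count in `IsTreeFor` makes the resulting connected graph acyclic. -/
lemma exists_tree [Fintype V] {G : SimpleGraph V} {ℓ₀ : V → V → ℝ} {N : ℝ}
    (hpos : ∀ u v, G.Adj u v → 0 < ℓ₀ u v) (hsym : ∀ u v, ℓ₀ u v = ℓ₀ v u) (hN0 : 0 ≤ N)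
    (hG : G.Connected)
    (hN : ∀ k : ℕ, 2 ^ k ≤ vol G Finset.univ → ∑ j ∈ Finset.range k, (1 : ℝ) / (j + 1) ≤ N) :
    ∃ (T : SimpleGraph V) (σ : V → V → ℝ), T ≤ G ∧ T.Connected ∧ T.IsAcyclic ∧
      (∀ u v, G.Adj u v → Reach T.Adj ℓ₀ u v (σ u v)) ∧
      ∑ e ∈ pairs G Finset.univ, σ e.1 e.2 / ℓ₀ e.1 e.2 ≤
        4096 * N * (vol G Finset.univ * Real.log (vol G Finset.univ)) := by
  classical
  obtain ⟨x₀⟩ := hG.nonempty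
  have hh : ∀ u v, halve ℓ₀ ∅ u v = ℓ₀ u v := fun u v => by simp [halve]
  obtain ⟨D, hD⟩ : ∃ D, IsDist G Finset.univ (halve ℓ₀ ∅) x₀ D := by
    refine exists_isDist (Finset.mem_univ _) (fun u v h => by rw [hh]; exact hpos u v h.1)
      fun x _ => ?_
    obtain ⟨p⟩ := hG.preconnected x₀ x
    induction p with
    | nil => exact ⟨0, .refl _ le_rfl⟩
    | cons h p ih =>
      obtain ⟨L, hL⟩ := ih (Finset.mem_univ _)
      exact ⟨_, (Reach.single ⟨h, Finset.mem_univ _, Finset.mem_univ _⟩ le_rfl).trans hL⟩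
  obtain ⟨T, σ, hT⟩ := exists_treeFor hpos hsym hN0 _ Finset.univ rfl hN ∅ x₀ D x₀ {x₀} id hD
    (SPath.single hD) (by simp)
  have hreach : ∀ x, T.Reachable x₀ x := fun x => by
    obtain ⟨p, -⟩ := (hT.dist x (Finset.mem_univ _)).exists_walk (wt := Sym2.lift ⟨ℓ₀, hsym⟩)
      (fun _ _ => rfl)
    exact ⟨p⟩
  have hTc : T.Connected := by
    have : Nonempty V := ⟨x₀⟩
    exact ⟨fun u v => (hreach u).symm.trans (hreach v)⟩
  refine ⟨T, σ, fun u v h => (hT.le u v h).1, hTc, ?_, fun u v h =>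
    hT.str u v ⟨h, Finset.mem_univ _, Finset.mem_univ _⟩, hT.cost⟩
  refine (SimpleGraph.isTree_iff_connected_and_card.2 ⟨hTc, ?_⟩).isAcyclic
  have h1 := hTc.card_vert_le_card_edgeSet_add_one
  have h2 := hT.card
  rw [Finset.card_univ, ← Nat.card_eq_fintype_card, ← Nat.card_coe_set_eq] at h2
  omega

/-- The harmonic sums used in region growing are `O(log (log n))`, as `2 ^ k ≤ n ^ 3` makes `k` a
multiple of `log n`. -/
lemma harmonic_bound {M n : ℕ} (hn : 3 ≤ n) (hM : M ≤ n ^ 3) (k : ℕ) (hk : 2 ^ k ≤ M) :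
    ∑ j ∈ Finset.range k, (1 : ℝ) / (j + 1) ≤ 3 + Real.log (Real.log n) := by
  have hn' : (3 : ℝ) ≤ n := by exact_mod_cast hn
  have hlog : 1 < Real.log n := by
    rw [Real.lt_log_iff_exp_lt (by linarith)]
    exact Real.exp_one_lt_three.trans_le hn'
  have hll := Real.log_pos hlog
  rcases Nat.eq_zero_or_pos k with rfl | hk0
  · simp; linarith
  have h1 : ∑ j ∈ Finset.range k, (1 : ℝ) / (j + 1) = (harmonic k : ℝ) := by
    simp [harmonic]
  have h2 : (k : ℝ) * Real.log 2 ≤ 3 * Real.log n := by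
    have : (2 : ℝ) ^ k ≤ (n : ℝ) ^ 3 := by exact_mod_cast hk.trans hM
    have := Real.log_le_log (by positivity) this
    rw [Real.log_pow, Real.log_pow] at this
    exact_mod_cast this
  have h3 : (k : ℝ) ≤ 5 * Real.log n := by
    have := Real.log_two_gt_d9
    have : (0 : ℝ) < k := by exact_mod_cast hk0
    nlinarith
  have h4 : Real.log k ≤ Real.log 5 + Real.log (Real.log n) := by
    rw [← Real.log_mul (by norm_num) (by linarith)]
    exact Real.log_le_log (by exact_mod_cast hk0) h3
  have h5 : Real.log 5 ≤ 2 := by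
    rw [Real.log_le_iff_le_exp (by norm_num)]
    have := Real.exp_one_gt_d9
    have h : Real.exp 2 = Real.exp 1 * Real.exp 1 := by rw [← Real.exp_add]; norm_num
    rw [h]
    nlinarith
  rw [h1]
  linarith [harmonic_le_one_add_log k]

end Final

end LowStretch

open LowStretch

/-- low-stretch spanning trees, Abraham–Bartal–Neiman.  Every connected
weighted graph with `n ≥ 3` vertices and `m` edges has a spanning tree `T` of its support
graph whose total stretch is at most `C · m · log n · (log log n)³`.  The total stretch
(a sum over unordered edges) is written as half the sum over ordered pairs; the paths in
`T` are universally quantified, which determines them since `T` is acyclic. -/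
theorem low_stretch_spanning_tree :
    ∃ C : ℝ, 0 < C ∧
      ∀ (V : Type) [Fintype V] [DecidableEq V]
        (w : V → V → ℝ) (hsym : ∀ u v, w u v = w v u),
        (∀ u v, 0 ≤ w u v) → (∀ u, w u u = 0) →
        ∀ (G : SimpleGraph V), (∀ u v, G.Adj u v ↔ 0 < w u v) → G.Connected →
        ∀ n m : ℕ, Fintype.card V = n → 3 ≤ n → m = G.edgeSet.ncard →
        ∃ T : SimpleGraph V, T ≤ G ∧ T.Connected ∧ T.IsAcyclic ∧
          ∀ P : ∀ u v : V, T.Walk u v, (∀ u v, (P u v).IsPath) →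
            (∑ u, ∑ v, if 0 < w u v then
                w u v * ((P u v).edges.map fun e => 1 / Sym2.lift ⟨w, hsym⟩ e).sum
              else 0) / 2
              ≤ C * m * Real.log n * Real.log (Real.log n) ^ 3 := by
  have hlog3 : 1 < Real.log 3 := by
    rw [Real.lt_log_iff_exp_lt (by norm_num)]
    exact Real.exp_one_lt_three
  -- `log (log n) ≥ b > 0`, so that `3 + log (log n)` is at most a multiple of `log (log n) ^ 3`
  set b : ℝ := Real.log (Real.log 3) with hb
  have hb0 : 0 < b := Real.log_pos hlog3
  refine ⟨24576 * (3 / b ^ 3 + 1 / b ^ 2), by positivity, ?_⟩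
  intro V _ _ w hsym hnn _ G hG hconn n m hVn hn hm
  have hn' : (3 : ℝ) ≤ n := by exact_mod_cast hn
  have hlogn : Real.log 3 ≤ Real.log n := Real.log_le_log (by norm_num) hn'
  have hbL : b ≤ Real.log (Real.log n) := Real.log_le_log (by linarith) hlogn
  set L := Real.log (Real.log n)
  have hL0 : 0 < L := hb0.trans_le hbL
  have hNL : 3 + L ≤ (3 / b ^ 3 + 1 / b ^ 2) * L ^ 3 := by
    have h1 : 1 ≤ L / b := (one_le_div hb0).2 hbL
    have h2 : (3 / b ^ 3 + 1 / b ^ 2) * L ^ 3 = 3 * (L / b) ^ 3 + L * (L / b) ^ 2 := by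
      field_simp
    rw [h2]
    have h3 : 1 ≤ (L / b) ^ 3 := one_le_pow₀ h1
    have h4 : 1 ≤ (L / b) ^ 2 := one_le_pow₀ h1
    nlinarith
  have hvol : vol G Finset.univ = n + 2 * m := by
    rw [vol, card_pairs, Finset.card_univ, hVn, hm]
  have hnm : n ≤ m + 1 := by
    have := hconn.card_vert_le_card_edgeSet_add_one
    rw [Nat.card_eq_fintype_card, hVn] at this
    rw [hm]
    exact this
  have hvol3 : vol G Finset.univ ≤ n ^ 3 := by
    classical
    have h1 : (pairs G Finset.univ).card ≤ n * n := by
      refine (Finset.card_filter_le _ _).trans ?_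
      rw [Finset.card_product, Finset.card_univ, hVn]
    rw [vol, Finset.card_univ, hVn]
    nlinarith
  have hvolm : (vol G Finset.univ : ℝ) ≤ 4 * m := by
    have : vol G Finset.univ ≤ 4 * m := by omega
    exact_mod_cast this
  have hvol1 : (1 : ℝ) ≤ vol G Finset.univ := by
    have : 1 ≤ vol G Finset.univ := by omega
    exact_mod_cast this
  have hlogv : Real.log (vol G Finset.univ) ≤ 3 * Real.log n := by
    have h : (vol G Finset.univ : ℝ) ≤ (n : ℝ) ^ 3 := by exact_mod_cast hvol3
    have := Real.log_le_log (by linarith) h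
    rw [Real.log_pow] at this
    exact_mod_cast this
  obtain ⟨T, σ, hTG, hTc, hTa, hstr, hcost⟩ := exists_tree (G := G) (ℓ₀ := fun u v => 1 / w u v)
    (N := 3 + L) (fun u v h => one_div_pos.2 ((hG u v).1 h)) (fun u v => by rw [hsym])
    (by linarith) hconn (harmonic_bound hn hvol3)
  refine ⟨T, hTG, hTc, hTa, fun P hP => ?_⟩
  classical
  have hsum : (∑ u, ∑ v, if 0 < w u v then
      w u v * ((P u v).edges.map fun e => 1 / Sym2.lift ⟨w, hsym⟩ e).sum else 0) ≤
      ∑ e ∈ pairs G Finset.univ, σ e.1 e.2 / (1 / w e.1 e.2) := by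
    rw [pairs, Finset.sum_filter, Finset.univ_product_univ, Fintype.sum_prod_type]
    refine Finset.sum_le_sum fun u _ => Finset.sum_le_sum fun v _ => ?_
    by_cases h : G.Adj u v
    · rw [if_pos ((hG u v).1 h), if_pos h, div_div_eq_mul_div, div_one, mul_comm]
      refine mul_le_mul_of_nonneg_right ?_ (hnn u v)
      exact (hstr u v h).path_le hTa (wt := fun e => 1 / Sym2.lift ⟨w, hsym⟩ e)
        (fun _ _ => rfl) (fun e => by
          induction e with
          | _ a c => exact one_div_nonneg.2 (hnn a c)) _ (hP u v)
    · rw [if_neg (fun h' => h ((hG u v).2 h')), if_neg h]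
  have hfin : 4096 * (3 + L) * (vol G Finset.univ * Real.log (vol G Finset.univ)) ≤
      4096 * ((3 / b ^ 3 + 1 / b ^ 2) * L ^ 3) * (4 * m * (3 * Real.log n)) := by
    have := Real.log_nonneg hvol1
    gcongr
  have := hsum.trans (hcost.trans hfin)
  linarith
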